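/- arXiv:2306.09146 — 3 statements merged into one kernel-verified Lean document; each statement's English description precedes it below -/
import Mathlib

section
/- Let G be a basic CUH graph in which both D and D̃ are realized, and let ℓ be a positive natural number with ℓ ≤ ω_R. Then both the join of a single blue vertex with a red ℓ-clique (the blue vertex adjacent to all ℓ red vertices) and the disjoint union of a single blue vertex with a red ℓ-clique (the blue vertex adjacent to no red vertex) are realized in G. -/
open SimpleGraph

/-- A partial colored isomorphism of the 2-colored graph `(G, red)`, defined on the set `S`:
an injective map preserving colors and adjacency on `S`. -/
def IsPartialIso {V : Type} (G : SimpleGraph V) (red : V → Prop) (S : Set V) (f : V → V) :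
    Prop :=
  Set.InjOn f S ∧ (∀ v ∈ S, (red (f v) ↔ red v)) ∧
    ∀ u ∈ S, ∀ v ∈ S, (G.Adj (f u) (f v) ↔ G.Adj u v)

/-- A 2-colored graph is ultrahomogeneous if every isomorphism between two finite induced
colored subgraphs extends to a color-preserving automorphism. -/
def Ultrahomogeneous {V : Type} (G : SimpleGraph V) (red : V → Prop) : Prop :=
  ∀ S : Set V, S.Finite → ∀ f : V → V, IsPartialIso G red S f →
    ∃ ψ : G ≃g G, (∀ v, red (ψ v) ↔ red v) ∧ ∀ v ∈ S, ψ v = f v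

/-- The set `P` induces a disjoint union of cliques in `G` (no induced monochromatic `P₃`). -/
def IsUnionOfCliques {V : Type} (G : SimpleGraph V) (P : Set V) : Prop :=
  ∀ u ∈ P, ∀ v ∈ P, ∀ w ∈ P, G.Adj u v → G.Adj v w → u ≠ w → G.Adj u w

/-- `M` is an inclusion-wise maximal clique of the subgraph of `G` induced on `P`. -/
def IsMaxCliqueIn {V : Type} (G : SimpleGraph V) (P : Set V) (M : Set V) : Prop :=
  M ⊆ P ∧ G.IsClique M ∧ ∀ M' : Set V, M' ⊆ P → G.IsClique M' → M ⊆ M' → M = M'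

/-- `S` is an independent set in `G`. -/
def IsIndepIn {V : Type} (G : SimpleGraph V) (S : Set V) : Prop :=
  ∀ u ∈ S, ∀ v ∈ S, ¬ G.Adj u v

/-- The 2-colored graph `(H, redH)` is realized in `(G, red)`, i.e. isomorphic to an
induced colored subgraph of `G`. -/
def Realizes {V : Type} (G : SimpleGraph V) (red : V → Prop) {W : Type} (H : SimpleGraph W)
    (redH : W → Prop) : Prop :=
  ∃ f : W → V, Function.Injective f ∧ (∀ w, red (f w) ↔ redH w) ∧
    ∀ u w : W, G.Adj (f u) (f w) ↔ H.Adj u w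

/-- `(H, redH)` is minimally omitted in `(G, red)`: it is omitted, but every proper induced
subgraph of it is realized. -/
def MinOmitted {V : Type} (G : SimpleGraph V) (red : V → Prop) {W : Type} (H : SimpleGraph W)
    (redH : W → Prop) : Prop :=
  ¬ Realizes G red H redH ∧
    ∀ S : Set W, S ≠ Set.univ → Realizes G red (H.induce S) (fun x => redH x.1)

/-- Isomorphism of 2-colored graphs. -/
def ColoredIso {V : Type} (G : SimpleGraph V) (red : V → Prop) {W : Type} (H : SimpleGraph W)
    (redH : W → Prop) : Prop :=
  ∃ e : G ≃g H, ∀ v, red v ↔ redH (e v)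

/-- The graph obtained from `G` by complementing the cross edges while keeping the
edges inside each color class. -/
def crossComp {V : Type} (G : SimpleGraph V) (red : V → Prop) : SimpleGraph V :=
  SimpleGraph.fromRel (fun u v =>
    ((red u ↔ red v) ∧ G.Adj u v) ∨ (¬ (red u ↔ red v) ∧ ¬ G.Adj u v))

/-- The blow-up of the 2-colored graph `(H, redH)` (whose red class should be independent),
replacing every red vertex by a copy of `I` forming a clique, joined to the neighbors of the
original vertex. -/
def blowUp {V : Type} (H : SimpleGraph V) (redH : V → Prop) (I : Type) :
    SimpleGraph ({v : V // redH v} × I ⊕ {v : V // ¬ redH v}) :=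
  SimpleGraph.fromRel (fun x y =>
    match x, y with
    | Sum.inl (u, i), Sum.inl (u', i') => H.Adj u.1 u'.1 ∨ (u = u' ∧ i ≠ i')
    | Sum.inl (u, _), Sum.inr b => H.Adj u.1 b.1
    | Sum.inr b, Sum.inl (u, _) => H.Adj b.1 u.1
    | Sum.inr b, Sum.inr b' => H.Adj b.1 b'.1)

/-- The coloring of the blow-up: all vertices replacing red vertices are red. -/
def blowUpRed (V : Type) (redH : V → Prop) (I : Type) :
    ({v : V // redH v} × I ⊕ {v : V // ¬ redH v}) → Prop :=
  Sum.elim (fun _ => True) (fun _ => False)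

/-- `(G, red)` is a blow-up with the red class blown up: it is isomorphic (as a colored graph)
to the blow-up of some `(H, redH)` with independent red class by an `i`-clique, `2 ≤ i ≤ ℵ₀`. -/
def IsBlowUpOf {V : Type} (G : SimpleGraph V) (red : V → Prop) : Prop :=
  ∃ (U : Type) (H : SimpleGraph U) (redH : U → Prop) (I : Type),
    (∀ u v : U, redH u → redH v → ¬ H.Adj u v) ∧
    2 ≤ Cardinal.mk I ∧ Cardinal.mk I ≤ Cardinal.aleph0 ∧
    ∃ e : G ≃g blowUp H redH I, ∀ v, red v ↔ blowUpRed U redH I (e v)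

/-- `(G, red)` is a blow-up (of one of its two color classes). -/
def IsBlowUp {V : Type} (G : SimpleGraph V) (red : V → Prop) : Prop :=
  IsBlowUpOf G red ∨ IsBlowUpOf G (fun v => ¬ red v)

/-- A CUH graph: a countably infinite ultrahomogeneous 2-colored graph in which both
color classes induce disjoint unions of cliques. -/
def IsCUH {V : Type} (G : SimpleGraph V) (red : V → Prop) : Prop :=
  Countable V ∧ Infinite V ∧ Ultrahomogeneous G red ∧
    IsUnionOfCliques G {v | red v} ∧ IsUnionOfCliques G {v | ¬ red v}

/-- A basic CUH graph: a CUH graph which is not a blow-up and where both independence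
numbers are at least 2. -/
def IsBasicCUH {V : Type} (G : SimpleGraph V) (red : V → Prop) : Prop :=
  IsCUH G red ∧ ¬ IsBlowUp G red ∧
    (∃ u v, red u ∧ red v ∧ u ≠ v ∧ ¬ G.Adj u v) ∧
    (∃ u v, ¬ red u ∧ ¬ red v ∧ u ≠ v ∧ ¬ G.Adj u v)

/-- The graph `D`: red vertices `0, 1`, blue vertices `2, 3`, edges
`{01, 23, 02, 03, 12}` (a 2-colored diamond). -/
def Dgraph : SimpleGraph (Fin 4) :=
  SimpleGraph.fromRel (fun x y =>
    (x = 0 ∧ y = 1) ∨ (x = 2 ∧ y = 3) ∨ (x = 0 ∧ y = 2) ∨ (x = 0 ∧ y = 3) ∨ (x = 1 ∧ y = 2))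

/-- The coloring of `D` and `D̃`: `0, 1` are red, `2, 3` are blue. -/
def Dred : Fin 4 → Prop := fun x => x = 0 ∨ x = 1

/-- The graph `D̃`, the cross-edge complement of `D`: the path `0 – 1 – 3 – 2`. -/
def Dtilde : SimpleGraph (Fin 4) :=
  SimpleGraph.fromRel (fun x y => (x = 0 ∧ y = 1) ∨ (x = 1 ∧ y = 3) ∨ (x = 3 ∧ y = 2))

/-- `T_r`: the triangle with two red vertices and one blue vertex. -/
def Tr : SimpleGraph (Fin 3) := ⊤

/-- The coloring of `T_r` and `T̃_r`: `0, 1` red, `2` blue. -/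
def TrRed : Fin 3 → Prop := fun x => x = 0 ∨ x = 1

/-- `T̃_r`: a red edge together with an isolated blue vertex. -/
def TrTilde : SimpleGraph (Fin 3) := SimpleGraph.fromRel (fun x y => x = 0 ∧ y = 1)

/-- `T_b`: the triangle with one red vertex and two blue vertices. -/
def Tb : SimpleGraph (Fin 3) := ⊤

/-- The coloring of `T_b` and `T̃_b`: `0` red, `1, 2` blue. -/
def TbRed : Fin 3 → Prop := fun x => x = 0

/-- `T̃_b`: a blue edge together with an isolated red vertex. -/
def TbTilde : SimpleGraph (Fin 3) := SimpleGraph.fromRel (fun x y => x = 1 ∧ y = 2)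

/-- The red vertices equal or adjacent to `r`: the red clique of `r`, if `r` is red. -/
def redClique {V : Type} (G : SimpleGraph V) (red : V → Prop) (r : V) : Set V :=
  {v | red v ∧ (v = r ∨ G.Adj r v)}

lemma adj_of_mem_redClique {V : Type} {G : SimpleGraph V} {red : V → Prop}
    (hR : IsUnionOfCliques G {v | red v}) {r u v : V} (hr : red r)
    (hu : u ∈ redClique G red r) (hv : v ∈ redClique G red r) (huv : u ≠ v) : G.Adj u v := by
  obtain ⟨hu, rfl | hu'⟩ := hu
  · obtain ⟨hv, rfl | hv'⟩ := hv
    · exact absurd rfl huv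
    · exact hv'
  · obtain ⟨hv, rfl | hv'⟩ := hv
    · exact hu'.symm
    · exact hR u hu r hr v hv hu'.symm hv' huv

lemma redClique_subset {V : Type} {G : SimpleGraph V} {red : V → Prop}
    (hR : IsUnionOfCliques G {v | red v}) {r s : V} (hr : red r)
    (hs : s ∈ redClique G red r) : redClique G red s ⊆ redClique G red r := by
  rintro v ⟨hv, rfl | hv'⟩
  · exact hs
  · obtain ⟨hs, rfl | hs'⟩ := hs
    · exact ⟨hv, Or.inr hv'⟩
    · refine ⟨hv, ?_⟩
      by_cases h : v = r
      · exact Or.inl h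
      · exact Or.inr (hR r hr s hs v hv hs' hv' (Ne.symm h))

lemma map_mem_redClique {V : Type} {G : SimpleGraph V} {red : V → Prop} (ψ : G ≃g G)
    (hψ : ∀ v, red (ψ v) ↔ red v) {r v : V} :
    ψ v ∈ redClique G red (ψ r) ↔ v ∈ redClique G red r := by
  simp only [redClique, Set.mem_ofPred_eq, hψ, ψ.injective.eq_iff, ψ.map_adj_iff]

/-- In an ultrahomogeneous 2-colored graph, isomorphic configurations of two (possibly equal)
blue vertices and one red vertex are conjugate under the automorphism group. -/
lemma Ultrahomogeneous.exists_map_triple {V : Type} {G : SimpleGraph V} {red : V → Prop}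
    (hU : Ultrahomogeneous G red) {b c r b' c' r' : V} (hb : ¬ red b) (hc : ¬ red c)
    (hr : red r) (hb' : ¬ red b') (hc' : ¬ red c') (hr' : red r') (heq : b = c ↔ b' = c')
    (hbc : G.Adj b c ↔ G.Adj b' c') (hbr : G.Adj b r ↔ G.Adj b' r')
    (hcr : G.Adj c r ↔ G.Adj c' r') :
    ∃ ψ : G ≃g G, (∀ v, red (ψ v) ↔ red v) ∧ ψ b = b' ∧ ψ c = c' ∧ ψ r = r' := by
  classical
  have hbr₀ : b ≠ r := by rintro rfl; exact hb hr
  have hcr₀ : c ≠ r := by rintro rfl; exact hc hr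
  have hbr₁ : b' ≠ r' := by rintro rfl; exact hb' hr'
  have hcr₁ : c' ≠ r' := by rintro rfl; exact hc' hr'
  let f : V → V := fun v => if v = r then r' else if v = b then b' else c'
  have fb : f b = b' := by simp [f, hbr₀]
  have fr : f r = r' := by simp [f]
  have fc : f c = c' := by
    by_cases h : c = b
    · rw [h, fb]; exact heq.1 h.symm
    · simp [f, hcr₀, h]
  obtain ⟨ψ, h₁, h₂⟩ := hU {b, c, r} (by simp) f (by
    refine ⟨?_, ?_, ?_⟩
    · rintro u (rfl | rfl | rfl) v (rfl | rfl | rfl) h <;> simp only [fb, fc, fr] at h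
      exacts [rfl, heq.2 h, absurd h hbr₁, (heq.2 h.symm).symm, rfl, absurd h hcr₁,
        absurd h.symm hbr₁, absurd h.symm hcr₁, rfl]
    · rintro u (rfl | rfl | rfl) <;> simp only [fb, fc, fr]
      exacts [iff_of_false hb' hb, iff_of_false hc' hc, iff_of_true hr' hr]
    · rintro u (rfl | rfl | rfl) v (rfl | rfl | rfl) <;> simp only [fb, fc, fr]
      exacts [by simp, hbc.symm, hbr.symm, by rw [G.adj_comm c', G.adj_comm _ v, hbc], by simp,
        hcr.symm, by rw [G.adj_comm r', G.adj_comm _ v, hbr],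
        by rw [G.adj_comm r', G.adj_comm _ v, hcr], by simp])
  exact ⟨ψ, h₁, by rw [h₂ b (by simp), fb], by rw [h₂ c (by simp), fc],
    by rw [h₂ r (by simp), fr]⟩

/-- In an ultrahomogeneous 2-colored graph, a permutation that preserves a finite part `T` of a
red clique and adjacency to the blue vertex `b` is realized on `T` by an automorphism
fixing `b`. -/
lemma Ultrahomogeneous.exists_extend_perm {V : Type} {G : SimpleGraph V} {red : V → Prop}
    (hU : Ultrahomogeneous G red) {b : V} (hb : ¬ red b) {T : Set V} (hT : T.Finite)
    (hred : ∀ v ∈ T, red v) (hclique : G.IsClique T) (σ : Equiv.Perm V)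
    (hσT : ∀ v ∈ T, σ v ∈ T) (hσb : σ b = b) (hadj : ∀ v ∈ T, (G.Adj b (σ v) ↔ G.Adj b v)) :
    ∃ ψ : G ≃g G, (∀ v, red (ψ v) ↔ red v) ∧ ψ b = b ∧ ∀ v ∈ T, ψ v = σ v := by
  obtain ⟨ψ, h₁, h₂⟩ := hU (insert b T) (hT.insert b) σ (by
    refine ⟨σ.injective.injOn, ?_, ?_⟩
    · rintro v (rfl | hv)
      · rw [hσb]
      · simp [hred v hv, hred _ (hσT v hv)]
    · rintro u (rfl | hu) v (rfl | hv)
      · rw [hσb]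
      · rw [hσb]; exact hadj v hv
      · rw [hσb, G.adj_comm, G.adj_comm u]; exact hadj u hu
      · by_cases h : u = v
        · simp [h]
        · exact iff_of_true (hclique (hσT u hu) (hσT v hv) (σ.injective.ne h))
            (hclique hu hv h))
  exact ⟨ψ, h₁, by rw [h₂ b (by simp), hσb], fun v hv => h₂ v (by simp [hv])⟩

lemma iff_of_not_iff {p q r : Prop} (hp : ¬ (p ↔ r)) (hq : ¬ (q ↔ r)) : p ↔ q := by
  tauto

/-- Call a blue vertex `b` and a red vertex `v` related if `G.Adj b v ↔ p`, so that `p` selects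
either `G` or its cross-edge complement. If a red edge `r₁r₂` and a blue edge `b₁b₂` satisfy
exactly one relation, and a red edge and a blue edge satisfying exactly three relations exist,
then `b₁` is related to infinitely many vertices of the red clique of `r₁`. -/
lemma infinite_related_of_diamonds {V : Type} {G : SimpleGraph V} {red : V → Prop}
    (hU : Ultrahomogeneous G red) (hR : IsUnionOfCliques G {v | red v})
    (hB : IsUnionOfCliques G {v | ¬ red v}) (p : Prop) {r₁ r₂ b₁ b₂ s₁ s₂ c₁ c₂ : V}
    (hr₁ : red r₁) (hr₂ : red r₂) (hb₁ : ¬ red b₁) (hb₂ : ¬ red b₂)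
    (hr : G.Adj r₁ r₂) (hb : G.Adj b₁ b₂)
    (h₁₁ : ¬ (G.Adj b₁ r₁ ↔ p)) (h₁₂ : ¬ (G.Adj b₁ r₂ ↔ p))
    (h₂₁ : ¬ (G.Adj b₂ r₁ ↔ p)) (h₂₂ : G.Adj b₂ r₂ ↔ p)
    (hs₁ : red s₁) (hs₂ : red s₂) (hc₁ : ¬ red c₁) (hc₂ : ¬ red c₂)
    (hs : G.Adj s₁ s₂) (hc : G.Adj c₁ c₂)
    (k₁₁ : G.Adj c₁ s₁ ↔ p) (k₁₂ : G.Adj c₁ s₂ ↔ p)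
    (k₂₁ : G.Adj c₂ s₁ ↔ p) (k₂₂ : ¬ (G.Adj c₂ s₂ ↔ p)) :
    {v | v ∈ redClique G red r₁ ∧ (G.Adj b₁ v ↔ p)}.Infinite := by
  classical
  intro hfin
  set K := redClique G red r₁ with hK
  set N := {v | v ∈ K ∧ (G.Adj b₁ v ↔ p)} with hN
  have hr₁K : r₁ ∈ K := ⟨hr₁, Or.inl rfl⟩
  have hr₂K : r₂ ∈ K := ⟨hr₂, Or.inr hr⟩
  have hKr₂ : redClique G red r₂ ⊆ K := redClique_subset hR hr₁ hr₂K
  -- a vertex of `K` related to both `b₁` and `b₂`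
  obtain ⟨a, haK, ha₁, ha₂⟩ : ∃ a ∈ K, (G.Adj b₁ a ↔ p) ∧ (G.Adj b₂ a ↔ p) := by
    obtain ⟨ψ, hψ, e₁, e₂, e₃⟩ := hU.exists_map_triple hc₁ hc₂ hs₂ hb₂ hb₁ hr₂
      (iff_of_false hc.ne hb.ne') (iff_of_true hc hb.symm) (k₁₂.trans h₂₂.symm)
      (iff_of_not_iff k₂₂ h₁₂)
    refine ⟨ψ s₁, hKr₂ ?_, ?_, ?_⟩
    · rw [← e₃, map_mem_redClique ψ hψ]; exact ⟨hs₁, Or.inr hs.symm⟩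
    · rw [← e₂, ψ.map_adj_iff]; exact k₂₁
    · rw [← e₁, ψ.map_adj_iff]; exact k₁₁
  -- a vertex of `K` related to `b₁` only
  obtain ⟨c, ⟨hcK, hc₁'⟩, hc₂'⟩ : ∃ c ∈ N, ¬ (G.Adj b₂ c ↔ p) := by
    by_contra! hsub
    obtain ⟨ψ, hψ, e₁, -, e₃⟩ := hU.exists_map_triple hb₁ hb₁ hr₁ hb₂ hb₂ hr₁
      (by simp) (by simp) (iff_of_not_iff h₁₁ h₂₁) (iff_of_not_iff h₁₁ h₂₁)
    have himage : ψ '' N = {v | v ∈ K ∧ (G.Adj b₂ v ↔ p)} := by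
      ext v
      obtain ⟨u, rfl⟩ := ψ.surjective v
      have hmem := map_mem_redClique ψ hψ (r := r₁) (v := u)
      rw [e₃] at hmem
      rw [ψ.injective.mem_set_image]
      change u ∈ K ∧ (G.Adj b₁ u ↔ p) ↔ ψ u ∈ K ∧ (G.Adj b₂ (ψ u) ↔ p)
      rw [hK, hmem, ← e₁, ψ.map_adj_iff]
    have hsub' : N ⊆ ψ '' N := by
      rw [himage]; exact fun v hv => ⟨hv.1, hsub v hv⟩
    have hEq : N = ψ '' N := Set.eq_of_subset_of_ncard_le hsub'
      (Set.ncard_image_of_injective N ψ.injective).le (hfin.image ψ)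
    have : r₂ ∈ N := by rw [hEq, himage]; exact ⟨hr₂K, h₂₂⟩
    exact h₁₂ this.2
  set T := insert r₁ (insert r₂ N) with hT
  have hTfin : T.Finite := (hfin.insert _).insert _
  have hTK : T ⊆ K := by
    rintro v (rfl | rfl | hv)
    exacts [hr₁K, hr₂K, hv.1]
  have hTclique : G.IsClique T := fun u hu v hv huv =>
    adj_of_mem_redClique hR hr₁ (hTK hu) (hTK hv) huv
  have haT : a ∈ T := by simp [hT, hN, haK, ha₁]
  have hcT : c ∈ T := by simp [hT, hN, hcK, hc₁']
  have hr₁T : r₁ ∈ T := by simp [hT]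
  have hr₂T : r₂ ∈ T := by simp [hT]
  have hbT : ∀ v ∈ T, v ≠ b₂ := by rintro v hv rfl; exact hb₂ (hTK hv).1
  have hcr₁ : c ≠ r₁ := by rintro rfl; exact h₁₁ hc₁'
  have hcr₂ : c ≠ r₂ := by rintro rfl; exact hc₂' h₂₂
  have hac : a ≠ c := by rintro rfl; exact hc₂' ha₂
  have har₁ : a ≠ r₁ := by rintro rfl; exact h₁₁ ha₁
  have har₂ : a ≠ r₂ := by rintro rfl; exact h₁₂ ha₁
  have hr₁₂ : r₁ ≠ r₂ := hr.ne
  -- swapping members of `T` with equal relation to `b₂`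
  have swap_mem : ∀ {x y}, x ∈ T → y ∈ T → ∀ v ∈ T, Equiv.swap x y v ∈ T := by
    intro x y hx hy v hv
    rw [Equiv.swap_apply_def]; split_ifs <;> assumption
  have swap_adj : ∀ {x y}, (G.Adj b₂ x ↔ G.Adj b₂ y) →
      ∀ v, G.Adj b₂ (Equiv.swap x y v) ↔ G.Adj b₂ v := by
    intro x y hxy v
    rw [Equiv.swap_apply_def]
    split_ifs with h h
    · rw [h, hxy]
    · rw [h, hxy]
    · rfl
  have hσb : Equiv.swap c r₁ b₂ = b₂ :=
    Equiv.swap_apply_of_ne_of_ne (hbT c hcT).symm (hbT r₁ hr₁T).symm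
  have hτb : Equiv.swap a r₂ b₂ = b₂ :=
    Equiv.swap_apply_of_ne_of_ne (hbT a haT).symm (hbT r₂ hr₂T).symm
  have hσadj := swap_adj (x := c) (y := r₁) (iff_of_not_iff hc₂' h₂₁)
  have hτadj := swap_adj (x := a) (y := r₂) (ha₂.trans h₂₂.symm)
  obtain ⟨φ, hφ, φb, φT⟩ := hU.exists_extend_perm hb₂ hTfin (fun v hv => (hTK hv).1) hTclique
    (Equiv.swap c r₁) (swap_mem hcT hr₁T) hσb (fun v _ => hσadj v)
  obtain ⟨χ, hχ, χb, χT⟩ := hU.exists_extend_perm hb₂ hTfin (fun v hv => (hTK hv).1) hTclique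
    (Equiv.swap c r₁ * Equiv.swap a r₂)
    (fun v hv => swap_mem hcT hr₁T _ (swap_mem haT hr₂T v hv))
    (by rw [Equiv.Perm.mul_apply, hτb, hσb])
    (fun v _ => by rw [Equiv.Perm.mul_apply, hσadj, hτadj])
  -- `φ b₁` and `χ b₁` are unrelated to `c`, and `χ b₁` is also unrelated to `a`
  have φc : ¬ (G.Adj (φ b₁) c ↔ p) := by
    have : φ r₁ = c := by rw [φT r₁ hr₁T, Equiv.swap_apply_right]
    rw [← this, φ.map_adj_iff]; exact h₁₁
  have φ_of_ne : ∀ v ∈ N, v ≠ c → (G.Adj (φ b₁) v ↔ p) := by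
    intro v hv hvc
    have hvr : v ≠ r₁ := by rintro rfl; exact h₁₁ hv.2
    have : φ v = v := by
      rw [φT v (by simp [hT, hv]), Equiv.swap_apply_of_ne_of_ne hvc hvr]
    rw [← this, φ.map_adj_iff]; exact hv.2
  have χc : ¬ (G.Adj (χ b₁) c ↔ p) := by
    have : χ r₁ = c := by
      rw [χT r₁ hr₁T, Equiv.Perm.mul_apply, Equiv.swap_apply_of_ne_of_ne har₁.symm hr₁₂,
        Equiv.swap_apply_right]
    rw [← this, χ.map_adj_iff]; exact h₁₁
  have χa : ¬ (G.Adj (χ b₁) a ↔ p) := by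
    have : χ r₂ = a := by
      rw [χT r₂ hr₂T, Equiv.Perm.mul_apply, Equiv.swap_apply_right,
        Equiv.swap_apply_of_ne_of_ne hac har₁]
    rw [← this, χ.map_adj_iff]; exact h₁₂
  have adj_b₁ : ∀ ψ : G ≃g G, (∀ v, red (ψ v) ↔ red v) → ψ b₂ = b₂ →
      ¬ (G.Adj (ψ b₁) c ↔ p) → G.Adj b₁ (ψ b₁) := by
    intro ψ hψ hψb hψc
    refine hB b₁ hb₁ b₂ hb₂ (ψ b₁) (by simpa [hψ] using hb₁) hb ?_ ?_
    · have := ψ.map_adj_iff.2 hb.symm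
      rwa [hψb] at this
    · intro h; rw [← h] at hψc; exact hψc hc₁'
  have hφadj := adj_b₁ φ hφ φb φc
  have hχadj := adj_b₁ χ hχ χb χc
  obtain ⟨ψ, hψ, e₁, e₂, e₃⟩ := hU.exists_map_triple hb₁ (by simpa [hφ] using hb₁) hcK.1 hb₁
    (by simpa [hχ] using hb₁) hcK.1 (iff_of_false hφadj.ne hχadj.ne)
    (iff_of_true hφadj hχadj) Iff.rfl (iff_of_not_iff φc χc)
  obtain ⟨x, hx⟩ := ψ.surjective a
  have hxN : x ∈ N := by
    refine ⟨redClique_subset hR hr₁ hcK ?_, ?_⟩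
    · rw [← map_mem_redClique ψ hψ, e₃, hx]
      exact ⟨haK.1, Or.inr (adj_of_mem_redClique hR hr₁ hcK haK hac.symm)⟩
    · rw [← ψ.map_adj_iff, e₁, hx]; exact ha₁
  have hxc : x = c := by
    by_contra h
    have := φ_of_ne x hxN h
    rw [← ψ.map_adj_iff, e₂, hx] at this
    exact χa this
  rw [hxc, e₃] at hx
  exact hac hx.symm

lemma exists_clique_of_infinite_related {V : Type} {G : SimpleGraph V} {red : V → Prop}
    (hR : IsUnionOfCliques G {v | red v}) {b r : V} (hr : red r) {p : Prop}
    (hinf : {v | v ∈ redClique G red r ∧ (G.Adj b v ↔ p)}.Infinite) (n : ℕ) :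
    ∃ C : Finset V, C.card = n ∧ (∀ v ∈ C, red v) ∧
      (∀ u ∈ C, ∀ v ∈ C, u ≠ v → G.Adj u v) ∧ ∀ v ∈ C, (G.Adj b v ↔ p) := by
  obtain ⟨C, hC, hcard⟩ := hinf.exists_subset_card_eq n
  exact ⟨C, hcard, fun v hv => (hC hv).1.1,
    fun u hu v hv huv => adj_of_mem_redClique hR hr (hC hu).1 (hC hv).1 huv,
    fun v hv => (hC hv).2⟩

/-- in a basic CUH graph realizing `D` and `D̃`, for every `1 ≤ ℓ ≤ ω_R` both
the join and the disjoint union of a blue vertex with a red `ℓ`-clique are realized. -/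
theorem stmt_5 {V : Type} (G : SimpleGraph V) (red : V → Prop)
    (hG : IsBasicCUH G red)
    (hD : Realizes G red Dgraph Dred) (hDt : Realizes G red Dtilde Dred)
    (ℓ : ℕ) (hℓ : 0 < ℓ)
    (hωR : ∀ M : Set V, IsMaxCliqueIn G {v | red v} M → (ℓ : Cardinal) ≤ Cardinal.mk M) :
    (∃ (b : V) (C : Finset V), ¬ red b ∧ C.card = ℓ ∧ (∀ v ∈ C, red v) ∧
      (∀ u ∈ C, ∀ v ∈ C, u ≠ v → G.Adj u v) ∧ (∀ v ∈ C, G.Adj b v)) ∧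
    (∃ (b : V) (C : Finset V), ¬ red b ∧ C.card = ℓ ∧ (∀ v ∈ C, red v) ∧
      (∀ u ∈ C, ∀ v ∈ C, u ≠ v → G.Adj u v) ∧ (∀ v ∈ C, ¬ G.Adj b v)) := by
  obtain ⟨⟨-, -, hU, hR, hB⟩, -⟩ := hG
  obtain ⟨f, -, hf, hfadj⟩ := hD
  obtain ⟨g, -, hg, hgadj⟩ := hDt
  simp only [Fin.forall_fin_succ, Dred, Dgraph, Dtilde, SimpleGraph.fromRel_adj]
    at hf hg hfadj hgadj
  simp at hf hg hfadj hgadj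
  constructor
  · have hinf := infinite_related_of_diamonds hU hR hB True
      (r₁ := g 0) (r₂ := g 1) (b₁ := g 2) (b₂ := g 3)
      (s₁ := f 0) (s₂ := f 1) (c₁ := f 2) (c₂ := f 3)
    obtain ⟨C, h₁, h₂, h₃, h₄⟩ := exists_clique_of_infinite_related hR (by tauto)
      (hinf (by tauto) (by tauto) (by tauto) (by tauto) (by tauto) (by tauto) (by tauto)
        (by tauto) (by tauto) (by tauto) (by tauto) (by tauto) (by tauto) (by tauto) (by tauto)
        (by tauto) (by tauto) (by tauto) (by tauto) (by tauto)) ℓ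
    exact ⟨g 2, C, by tauto, h₁, h₂, h₃, fun v hv => by simpa using h₄ v hv⟩
  · have hinf := infinite_related_of_diamonds hU hR hB False
      (r₁ := f 0) (r₂ := f 1) (b₁ := f 2) (b₂ := f 3)
      (s₁ := g 0) (s₂ := g 1) (c₁ := g 2) (c₂ := g 3)
    obtain ⟨C, h₁, h₂, h₃, h₄⟩ := exists_clique_of_infinite_related hR (by tauto)
      (hinf (by tauto) (by tauto) (by tauto) (by tauto) (by tauto) (by tauto) (by tauto)
        (by tauto) (by tauto) (by tauto) (by tauto) (by tauto) (by tauto) (by tauto) (by tauto)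
        (by tauto) (by tauto) (by tauto) (by tauto) (by tauto)) ℓ
    exact ⟨f 2, C, by tauto, h₁, h₂, h₃, fun v hv => by simpa using h₄ v hv⟩
end

section
/- Let G be a basic CUH graph in which both D and D̃ are realized. Fix a maximal blue clique M_B and a finite red clique C with |C| ≤ ω_R. Then for every subset S ⊆ C there exists a vertex v ∈ M_B whose set of neighbors in C is exactly S. -/
open SimpleGraph

/-- A bipartite-type abstraction of an ultrahomogeneous 2-colored graph whose color classes are
unions of cliques: `s` and `t` are the relations of lying in the same clique of the color classes
`R` and `B`, and `P` is the cross adjacency. Both four-vertex graphs `D` and `D̃` are realized.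
The axioms are invariant under exchanging the colors and under complementing `P`. -/
structure HomogeneousPair {R B : Type} (s : R → R → Prop) (t : B → B → Prop)
    (P : R → B → Prop) : Prop where
  equiv_red : Equivalence s
  equiv_blue : Equivalence t
  extend : ∀ (S : Set R) (T : Set B), S.Finite → T.Finite → ∀ (f : R → R) (g : B → B),
    Set.InjOn f S → Set.InjOn g T →
    (∀ x ∈ S, ∀ y ∈ S, (s (f x) (f y) ↔ s x y)) →
    (∀ x ∈ T, ∀ y ∈ T, (t (g x) (g y) ↔ t x y)) →
    (∀ x ∈ S, ∀ y ∈ T, (P (f x) (g y) ↔ P x y)) →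
    ∃ (φ : R ≃ R) (γ : B ≃ B), (∀ x y, s (φ x) (φ y) ↔ s x y) ∧
      (∀ x y, t (γ x) (γ y) ↔ t x y) ∧ (∀ x y, P (φ x) (γ y) ↔ P x y) ∧
      (∀ x ∈ S, φ x = f x) ∧ ∀ y ∈ T, γ y = g y
  diamond : ∃ r₁ r₂ b₁ b₂, s r₁ r₂ ∧ r₁ ≠ r₂ ∧ t b₁ b₂ ∧ b₁ ≠ b₂ ∧
    P r₁ b₁ ∧ P r₁ b₂ ∧ P r₂ b₁ ∧ ¬ P r₂ b₂
  path : ∃ r₁ r₂ b₁ b₂, s r₁ r₂ ∧ r₁ ≠ r₂ ∧ t b₁ b₂ ∧ b₁ ≠ b₂ ∧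
    ¬ P r₁ b₁ ∧ ¬ P r₁ b₂ ∧ ¬ P r₂ b₁ ∧ P r₂ b₂

/-- Every subset of an `n`-element red clique is the trace of a vertex of every blue clique. -/
def AllTraces {R B : Type} (s : R → R → Prop) (t : B → B → Prop) (P : R → B → Prop)
    (n : ℕ) : Prop :=
  ∀ C : Finset R, (∀ x ∈ C, ∀ y ∈ C, s x y) → C.card = n → ∀ b, ∀ S ⊆ C,
    ∃ b', t b b' ∧ ∀ x ∈ C, (P x b' ↔ x ∈ S)

open Classical in
/-- The set of neighbors of `b` in `C`. -/
noncomputable def trace {R B : Type} (P : R → B → Prop) (C : Finset R) (b : B) : Finset R :=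
  C.filter (fun x => P x b)

theorem mem_trace {R B : Type} {P : R → B → Prop} {C : Finset R} {b : B} {x : R} :
    x ∈ trace P C b ↔ x ∈ C ∧ P x b := by
  classical
  simp [trace]

theorem trace_eq_of_forall {R B : Type} {P : R → B → Prop} {C S : Finset R} {b : B}
    (hS : S ⊆ C) (h : ∀ x ∈ C, (P x b ↔ x ∈ S)) : trace P C b = S := by
  ext x
  rw [mem_trace]
  exact ⟨fun hx => (h x hx.1).1 hx.2, fun hx => ⟨hS hx, (h x (hS hx)).2 hx⟩⟩

/-- Finite sets of equal size with distinguished subsets of equal size admit a bijection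
matching the distinguished subsets. -/
theorem exists_injOn_matching {R : Type} (C C' T T' : Finset R) (hT : T ⊆ C) (hT' : T' ⊆ C')
    (hc : C.card = C'.card) (ht : T.card = T'.card) :
    ∃ f : R → R, Set.InjOn f C ∧ (∀ x ∈ C, f x ∈ C') ∧ ∀ x ∈ C, (f x ∈ T' ↔ x ∈ T) := by
  classical
  have hd : (C \ T).card = (C' \ T').card := by
    rw [Finset.card_sdiff_of_subset hT, Finset.card_sdiff_of_subset hT', hc, ht]
  let e₁ : T ≃ T' := Finset.equivOfCardEq ht
  let e₂ : (C \ T : Finset R) ≃ (C' \ T' : Finset R) := Finset.equivOfCardEq hd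
  let f : R → R := fun x => if h : x ∈ T then e₁ ⟨x, h⟩ else
    if h' : x ∈ C \ T then e₂ ⟨x, h'⟩ else x
  have f_in : ∀ x (h : x ∈ T), f x = e₁ ⟨x, h⟩ := fun x h => by simp only [f, dif_pos h]
  have f_out : ∀ x (h : x ∈ C \ T), f x = e₂ ⟨x, h⟩ := fun x h => by
    simp only [f, dif_neg (Finset.mem_sdiff.1 h).2, dif_pos h]
  have mem_in : ∀ x, x ∈ T → f x ∈ T' := fun x h => by rw [f_in x h]; exact (e₁ _).2
  have mem_out : ∀ x, x ∈ C \ T → f x ∈ C' \ T' := fun x h => by rw [f_out x h]; exact (e₂ _).2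
  refine ⟨f, ?_, ?_, ?_⟩
  · intro x hx y hy hxy
    by_cases hxT : x ∈ T <;> by_cases hyT : y ∈ T
    · rw [f_in x hxT, f_in y hyT] at hxy
      simpa using e₁.injective (Subtype.ext hxy)
    · have := (Finset.mem_sdiff.1 (mem_out y (Finset.mem_sdiff.2 ⟨hy, hyT⟩))).2
      exact absurd (hxy ▸ mem_in x hxT) this
    · have := (Finset.mem_sdiff.1 (mem_out x (Finset.mem_sdiff.2 ⟨hx, hxT⟩))).2
      exact absurd (hxy ▸ mem_in y hyT) this
    · rw [f_out x (Finset.mem_sdiff.2 ⟨hx, hxT⟩), f_out y (Finset.mem_sdiff.2 ⟨hy, hyT⟩)] at hxy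
      simpa using e₂.injective (Subtype.ext hxy)
  · intro x hx
    by_cases hxT : x ∈ T
    · exact hT' (mem_in x hxT)
    · exact (Finset.mem_sdiff.1 (mem_out x (Finset.mem_sdiff.2 ⟨hx, hxT⟩))).1
  · intro x hx
    by_cases hxT : x ∈ T
    · simp [hxT, mem_in x hxT]
    · simp [hxT, (Finset.mem_sdiff.1 (mem_out x (Finset.mem_sdiff.2 ⟨hx, hxT⟩))).2]

namespace HomogeneousPair

variable {R B : Type} {s : R → R → Prop} {t : B → B → Prop} {P : R → B → Prop}

theorem swap (h : HomogeneousPair s t P) : HomogeneousPair t s (fun b r => P r b) where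
  equiv_red := h.equiv_blue
  equiv_blue := h.equiv_red
  extend S T hS hT f g hf hg hs ht hP := by
    obtain ⟨φ, γ, h₁, h₂, h₃, h₄, h₅⟩ := h.extend T S hT hS g f hg hf ht hs
      (fun x hx y hy => hP y hy x hx)
    exact ⟨γ, φ, h₂, h₁, fun x y => h₃ y x, h₅, h₄⟩
  diamond := by
    obtain ⟨r₁, r₂, b₁, b₂, h₁, h₂, h₃, h₄, h₅, h₆, h₇, h₈⟩ := h.diamond
    exact ⟨b₁, b₂, r₁, r₂, h₃, h₄, h₁, h₂, h₅, h₇, h₆, h₈⟩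
  path := by
    obtain ⟨r₁, r₂, b₁, b₂, h₁, h₂, h₃, h₄, h₅, h₆, h₇, h₈⟩ := h.path
    exact ⟨b₁, b₂, r₁, r₂, h₃, h₄, h₁, h₂, h₅, h₇, h₆, h₈⟩

theorem compl (h : HomogeneousPair s t P) : HomogeneousPair s t (fun r b => ¬ P r b) where
  equiv_red := h.equiv_red
  equiv_blue := h.equiv_blue
  extend S T hS hT f g hf hg hs ht hP := by
    obtain ⟨φ, γ, h₁, h₂, h₃, h₄, h₅⟩ := h.extend S T hS hT f g hf hg hs ht
      (fun x hx y hy => not_iff_not.1 (hP x hx y hy))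
    exact ⟨φ, γ, h₁, h₂, fun x y => not_congr (h₃ x y), h₄, h₅⟩
  diamond := by
    obtain ⟨r₁, r₂, b₁, b₂, h₁, h₂, h₃, h₄, h₅, h₆, h₇, h₈⟩ := h.path
    exact ⟨r₁, r₂, b₁, b₂, h₁, h₂, h₃, h₄, h₅, h₆, h₇, not_not.2 h₈⟩
  path := by
    obtain ⟨r₁, r₂, b₁, b₂, h₁, h₂, h₃, h₄, h₅, h₆, h₇, h₈⟩ := h.diamond
    exact ⟨r₁, r₂, b₁, b₂, h₁, h₂, h₃, h₄, not_not.2 h₅, not_not.2 h₆, not_not.2 h₇, h₈⟩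

theorem clique_insert [DecidableEq R] (h : HomogeneousPair s t P) {C : Finset R} {x : R}
    (hC : ∀ y ∈ C, ∀ z ∈ C, s y z) (hx : ∀ y ∈ C, s x y) :
    ∀ y ∈ insert x C, ∀ z ∈ insert x C, s y z := by
  simp only [Finset.forall_mem_insert]
  exact ⟨⟨h.equiv_red.refl x, hx⟩, fun y hy => ⟨h.equiv_red.symm (hx y hy), hC y hy⟩⟩

/-- Homogeneity for partial maps between cliques. -/
theorem extend_cliques (h : HomogeneousPair s t P) (S : Finset R) (T : Finset B)
    (f : R → R) (g : B → B) (hf : Set.InjOn f S) (hg : Set.InjOn g T)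
    (hS : ∀ x ∈ S, ∀ y ∈ S, s x y) (hS' : ∀ x ∈ S, ∀ y ∈ S, s (f x) (f y))
    (hT : ∀ x ∈ T, ∀ y ∈ T, t x y) (hT' : ∀ x ∈ T, ∀ y ∈ T, t (g x) (g y))
    (hP : ∀ x ∈ S, ∀ y ∈ T, (P (f x) (g y) ↔ P x y)) :
    ∃ (φ : R ≃ R) (γ : B ≃ B), (∀ x y, s (φ x) (φ y) ↔ s x y) ∧
      (∀ x y, t (γ x) (γ y) ↔ t x y) ∧ (∀ x y, P (φ x) (γ y) ↔ P x y) ∧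
      (∀ x ∈ S, φ x = f x) ∧ ∀ y ∈ T, γ y = g y :=
  h.extend S T S.finite_toSet T.finite_toSet f g hf hg
    (fun x hx y hy => iff_of_true (hS' x hx y hy) (hS x hx y hy))
    (fun x hx y hy => iff_of_true (hT' x hx y hy) (hT x hx y hy)) hP

/-- Homogeneity for a red vertex together with a blue vertex. -/
theorem extend_one_one (h : HomogeneousPair s t P) {r r' : R} {b b' : B}
    (hP : P r' b' ↔ P r b) :
    ∃ (φ : R ≃ R) (γ : B ≃ B), (∀ x y, s (φ x) (φ y) ↔ s x y) ∧
      (∀ x y, t (γ x) (γ y) ↔ t x y) ∧ (∀ x y, P (φ x) (γ y) ↔ P x y) ∧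
      φ r = r' ∧ γ b = b' := by
  obtain ⟨φ, γ, h₁, h₂, h₃, h₄, h₅⟩ := h.extend_cliques {r} {b} (fun _ => r') (fun _ => b')
    (by simp) (by simp) (by simpa using h.equiv_red.refl r)
    (by simpa using h.equiv_red.refl r') (by simpa using h.equiv_blue.refl b)
    (by simpa using h.equiv_blue.refl b') (by simpa using hP)
  exact ⟨φ, γ, h₁, h₂, h₃, h₄ r (by simp), h₅ b (by simp)⟩

/-- Homogeneity for a red edge together with a blue vertex. -/
theorem extend_two_one (h : HomogeneousPair s t P) {r₁ r₂ q₁ q₂ : R} {b c : B}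
    (hr : r₁ ≠ r₂) (hrs : s r₁ r₂) (hq : q₁ ≠ q₂) (hqs : s q₁ q₂)
    (hP₁ : P q₁ c ↔ P r₁ b) (hP₂ : P q₂ c ↔ P r₂ b) :
    ∃ (φ : R ≃ R) (γ : B ≃ B), (∀ x y, s (φ x) (φ y) ↔ s x y) ∧
      (∀ x y, t (γ x) (γ y) ↔ t x y) ∧ (∀ x y, P (φ x) (γ y) ↔ P x y) ∧
      φ r₁ = q₁ ∧ φ r₂ = q₂ ∧ γ b = c := by
  classical
  have f₂ : (if r₂ = r₁ then q₁ else q₂) = q₂ := if_neg hr.symm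
  obtain ⟨φ, γ, h₁, h₂, h₃, h₄, h₅⟩ := h.extend_cliques {r₁, r₂} {b}
    (fun x => if x = r₁ then q₁ else q₂) (fun _ => c)
    (by
      intro x hx y hy hxy
      simp only [Finset.coe_insert, Finset.coe_singleton, Set.mem_insert_iff,
        Set.mem_singleton_iff] at hx hy
      rcases hx with rfl | rfl <;> rcases hy with rfl | rfl <;> simp_all)
    (by simp)
    (by simp [h.equiv_red.refl, hrs, h.equiv_red.symm hrs])
    (by simp [h.equiv_red.refl, hqs, h.equiv_red.symm hqs, f₂])
    (by simpa using h.equiv_blue.refl b)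
    (by simpa using h.equiv_blue.refl c) (by simp [f₂, hP₁, hP₂])
  exact ⟨φ, γ, h₁, h₂, h₃, by simpa using h₄ r₁ (by simp),
    by simpa [f₂] using h₄ r₂ (by simp), h₅ b (by simp)⟩

/-- All four traces on a red edge occur in every blue clique. -/
theorem exists_trace_two (h : HomogeneousPair s t P) {r₁ r₂ : R} (hr : r₁ ≠ r₂)
    (hrs : s r₁ r₂) (b : B) (e₁ e₂ : Prop) :
    ∃ b', t b b' ∧ (P r₁ b' ↔ e₁) ∧ (P r₂ b' ↔ e₂) := by
  have move : ∀ (q₁ q₂ : R) (c c' : B), q₁ ≠ q₂ → s q₁ q₂ → t c c' → ∀ b : B,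
      (P r₁ b ↔ P q₁ c) → (P r₂ b ↔ P q₂ c) →
      ∃ b', t b b' ∧ (P r₁ b' ↔ P q₁ c') ∧ (P r₂ b' ↔ P q₂ c') := by
    intro q₁ q₂ c c' hq hqs hc b hP₁ hP₂
    obtain ⟨φ, γ, -, h₂, h₃, rfl, rfl, rfl⟩ := h.extend_two_one hq hqs hr hrs hP₁ hP₂
    exact ⟨γ c', (h₂ _ _).2 hc, h₃ _ _, h₃ _ _⟩
  obtain ⟨q₁, q₂, c₁, c₂, hqs, hq, hc, -, d₁, d₂, d₃, d₄⟩ := h.diamond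
  obtain ⟨p₁, p₂, a₁, a₂, hps, hp, ha, -, f₁, f₂, f₃, f₄⟩ := h.path
  have hc' := h.equiv_blue.symm hc
  have ha' := h.equiv_blue.symm ha
  have hqs' := h.equiv_red.symm hqs
  have hps' := h.equiv_red.symm hps
  have tt_tf : ∀ b, P r₁ b → P r₂ b → ∃ b', t b b' ∧ P r₁ b' ∧ ¬ P r₂ b' := fun b x y => by
    simpa [*] using move q₁ q₂ c₁ c₂ hq hqs hc b (by simp [*]) (by simp [*])
  have tf_tt : ∀ b, P r₁ b → ¬ P r₂ b → ∃ b', t b b' ∧ P r₁ b' ∧ P r₂ b' := fun b x y => by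
    simpa [*] using move q₁ q₂ c₂ c₁ hq hqs hc' b (by simp [*]) (by simp [*])
  have tt_ft : ∀ b, P r₁ b → P r₂ b → ∃ b', t b b' ∧ ¬ P r₁ b' ∧ P r₂ b' := fun b x y => by
    simpa [*] using move q₂ q₁ c₁ c₂ hq.symm hqs' hc b (by simp [*]) (by simp [*])
  have ff_ft : ∀ b, ¬ P r₁ b → ¬ P r₂ b → ∃ b', t b b' ∧ ¬ P r₁ b' ∧ P r₂ b' := fun b x y => by
    simpa [*] using move p₁ p₂ a₁ a₂ hp hps ha b (by simp [*]) (by simp [*])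
  have ft_ff : ∀ b, ¬ P r₁ b → P r₂ b → ∃ b', t b b' ∧ ¬ P r₁ b' ∧ ¬ P r₂ b' := fun b x y => by
    simpa [*] using move p₁ p₂ a₂ a₁ hp hps ha' b (by simp [*]) (by simp [*])
  have ff_tf : ∀ b, ¬ P r₁ b → ¬ P r₂ b → ∃ b', t b b' ∧ P r₁ b' ∧ ¬ P r₂ b' := fun b x y => by
    simpa [*] using move p₂ p₁ a₁ a₂ hp.symm hps' ha b (by simp [*]) (by simp [*])
  have exists_tt : ∃ b', t b b' ∧ P r₁ b' ∧ P r₂ b' := by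
    have of_tf : ∀ b₀, t b b₀ → P r₁ b₀ → ¬ P r₂ b₀ → ∃ b', t b b' ∧ P r₁ b' ∧ P r₂ b' :=
      fun b₀ z x y => by
        obtain ⟨b', hb, hb'⟩ := tf_tt b₀ x y
        exact ⟨b', h.equiv_blue.trans z hb, hb'⟩
    have of_ff : ∀ b₀, t b b₀ → ¬ P r₁ b₀ → ¬ P r₂ b₀ → ∃ b', t b b' ∧ P r₁ b' ∧ P r₂ b' :=
      fun b₀ z x y => by
        obtain ⟨b', hb, hb'⟩ := ff_tf b₀ x y
        exact of_tf b' (h.equiv_blue.trans z hb) hb'.1 hb'.2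
    by_cases x : P r₁ b <;> by_cases y : P r₂ b
    · exact ⟨b, h.equiv_blue.refl b, x, y⟩
    · exact of_tf b (h.equiv_blue.refl b) x y
    · obtain ⟨b', hb, hb'⟩ := ft_ff b x y
      exact of_ff b' hb hb'.1 hb'.2
    · exact of_ff b (h.equiv_blue.refl b) x y
  obtain ⟨b₀, hb₀, x, y⟩ := exists_tt
  by_cases he₁ : e₁ <;> by_cases he₂ : e₂ <;> simp only [he₁, he₂, iff_true, iff_false]
  · exact ⟨b₀, hb₀, x, y⟩
  · obtain ⟨b', hb, hb'⟩ := tt_tf b₀ x y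
    exact ⟨b', h.equiv_blue.trans hb₀ hb, hb'⟩
  · obtain ⟨b', hb, hb'⟩ := tt_ft b₀ x y
    exact ⟨b', h.equiv_blue.trans hb₀ hb, hb'⟩
  · obtain ⟨b', hb, hb'⟩ := tt_ft b₀ x y
    obtain ⟨b'', hc, hc'⟩ := ft_ff b' hb'.1 hb'.2
    exact ⟨b'', h.equiv_blue.trans (h.equiv_blue.trans hb₀ hb) hc, hc'⟩

/-- No red clique is a single vertex. -/
theorem exists_ne_red (h : HomogeneousPair s t P) (r : R) : ∃ r', r ≠ r' ∧ s r r' := by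
  obtain ⟨q₁, q₂, -, -, hqs, hq, -⟩ := h.diamond
  obtain ⟨φ, -, h₁, -, -, h₄, -⟩ := h.extend_cliques {q₁} ∅ (fun _ => r) id
    (by simp) (by simp) (by simpa using h.equiv_red.refl q₁) (by simpa using h.equiv_red.refl r)
    (by simp) (by simp) (by simp)
  have hφ : φ q₁ = r := h₄ q₁ (by simp)
  exact ⟨φ q₂, fun e => hq (φ.injective (hφ.trans e)), hφ ▸ (h₁ _ _).2 hqs⟩

theorem exists_adj_red (h : HomogeneousPair s t P) (r : R) (b : B) : ∃ r', s r r' ∧ P r' b := by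
  obtain ⟨b', hne, hb⟩ := h.swap.exists_ne_red b
  obtain ⟨r', hr, hP, -⟩ := h.swap.exists_trace_two hne hb r True True
  exact ⟨r', hr, hP.2 trivial⟩

theorem exists_common_red (h : HomogeneousPair s t P) (r : R) {b b' : B} (hne : b ≠ b')
    (hb : t b b') : ∃ r', s r r' ∧ P r' b ∧ P r' b' := by
  obtain ⟨r', hr, hP, hP'⟩ := h.swap.exists_trace_two hne hb r True True
  exact ⟨r', hr, hP.2 trivial, hP'.2 trivial⟩

theorem allTraces_zero (h : HomogeneousPair s t P) : AllTraces s t P 0 := by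
  intro C _ hn b S _
  rw [Finset.card_eq_zero] at hn
  exact ⟨b, h.equiv_blue.refl b, by simp [hn]⟩

theorem allTraces_one (h : HomogeneousPair s t P) : AllTraces s t P 1 := by
  intro C _ hn b S _
  obtain ⟨r, rfl⟩ := Finset.card_eq_one.1 hn
  obtain ⟨r', hne, hr⟩ := h.exists_ne_red r
  obtain ⟨b', hb, hP, -⟩ := h.exists_trace_two hne hr b (r ∈ S) True
  exact ⟨b', hb, by simpa using hP⟩

theorem allTraces_two (h : HomogeneousPair s t P) : AllTraces s t P 2 := by
  classical
  intro C hC hn b S _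
  obtain ⟨r, r', hne, rfl⟩ := Finset.card_eq_two.1 hn
  obtain ⟨b', hb, hP, hP'⟩ := h.exists_trace_two hne (hC r (by simp) r' (by simp)) b
    (r ∈ S) (r' ∈ S)
  exact ⟨b', hb, by simpa using ⟨hP, hP'⟩⟩

/-- The trace sizes occurring in a blue clique on a red clique of given size are determined
by any one of them. -/
theorem transfer_trace_card (h : HomogeneousPair s t P) {C C' : Finset R}
    (hC : ∀ x ∈ C, ∀ y ∈ C, s x y) (hC' : ∀ x ∈ C', ∀ y ∈ C', s x y)
    (hcard : C.card = C'.card) {b b' : B} (hb : (trace P C b).card = (trace P C' b').card)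
    {c : B} (hc : t b c) : ∃ c', t b' c' ∧ (trace P C' c').card = (trace P C c).card := by
  classical
  obtain ⟨f, hf, hfC, hfT⟩ := exists_injOn_matching C C' (trace P C b) (trace P C' b')
    (fun x hx => (mem_trace.1 hx).1) (fun x hx => (mem_trace.1 hx).1) hcard hb
  obtain ⟨φ, γ, -, h₂, h₃, h₄, h₅⟩ := h.extend_cliques C {b} f (fun _ => b') hf (by simp) hC
    (fun x hx y hy => hC' _ (hfC x hx) _ (hfC y hy)) (by simpa using h.equiv_blue.refl b)
    (by simpa using h.equiv_blue.refl b') (by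
      intro x hx y hy
      obtain rfl := Finset.mem_singleton.1 hy
      simpa [mem_trace, hx, hfC x hx] using hfT x hx)
  have hγ : γ b = b' := h₅ b (by simp)
  have himg : C.image φ = C' := by
    refine Finset.eq_of_subset_of_card_le ?_ ?_
    · intro x hx
      obtain ⟨y, hy, rfl⟩ := Finset.mem_image.1 hx
      rw [h₄ y hy]
      exact hfC y hy
    · rw [Finset.card_image_of_injective _ φ.injective, hcard]
  refine ⟨γ c, hγ ▸ (h₂ _ _).2 hc, ?_⟩
  rw [← Finset.card_image_of_injective (trace P C c) φ.injective]
  congr 1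
  ext x
  obtain ⟨y, rfl⟩ := φ.surjective x
  simp [mem_trace, ← himg, h₃]

section Step

variable {n : ℕ}

theorem exists_trace_swap [DecidableEq R] (h : HomogeneousPair s t P)
    (ih : AllTraces s t P (n + 2)) {C : Finset R} (hC : ∀ x ∈ C, ∀ y ∈ C, s x y)
    (hcard : C.card = n + 3) {u v : R} (hu : u ∈ C) (hv : v ∈ C) (b : B) :
    ∃ b', t b b' ∧ ∀ x ∈ C, (P x b' ↔ P (Equiv.swap u v x) b) := by
  have hpos : 0 < ((C.erase u).erase v).card := by
    have := Finset.pred_card_le_card_erase (s := C) (a := u)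
    have := Finset.pred_card_le_card_erase (s := C.erase u) (a := v)
    omega
  obtain ⟨c, hc⟩ := Finset.card_pos.1 hpos
  simp only [Finset.mem_erase] at hc
  obtain ⟨hcv, hcu, hcC⟩ := hc
  obtain ⟨w, hw, hwP⟩ := ih (C.erase c)
    (fun x hx y hy => hC _ (Finset.mem_of_mem_erase hx) _ (Finset.mem_of_mem_erase hy))
    (by rw [Finset.card_erase_of_mem hcC, hcard]; rfl) b (C.erase c) subset_rfl
  have hwu : P u w := (hwP u (by simp [hu, hcu.symm])).2 (by simp [hu, hcu.symm])
  have hwv : P v w := (hwP v (by simp [hv, hcv.symm])).2 (by simp [hv, hcv.symm])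
  have hmem : ∀ x ∈ C, Equiv.swap u v x ∈ C := by
    intro x hx
    rw [Equiv.swap_apply_def]
    split_ifs <;> assumption
  obtain ⟨φ, γ, -, h₂, h₃, h₄, h₅⟩ := h.extend_cliques C {w} (Equiv.swap u v) id
    (Equiv.injective _).injOn (by simp) hC (fun x hx y hy => hC _ (hmem x hx) _ (hmem y hy))
    (by simpa using h.equiv_blue.refl w) (by simpa using h.equiv_blue.refl w) (by
      intro x hx y hy
      obtain rfl := Finset.mem_singleton.1 hy
      rw [Equiv.swap_apply_def]
      split_ifs with e₁ e₂
      · simp [e₁, hwu, hwv]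
      · simp [e₂, hwu, hwv]
      · rfl)
  have hγ : γ w = w := h₅ w (by simp)
  refine ⟨γ b, h.equiv_blue.trans hw ?_, fun x hx => ?_⟩
  · have := (h₂ w b).2 (h.equiv_blue.symm hw)
    rwa [hγ] at this
  · have := h₃ (Equiv.swap u v x) b
    rwa [h₄ _ (hmem x hx), Equiv.swap_apply_self] at this

/-- Whether a subset of a red clique is a trace depends only on its size. -/
theorem exists_trace_of_card_eq (h : HomogeneousPair s t P) (ih : AllTraces s t P (n + 2))
    {C : Finset R} (hC : ∀ x ∈ C, ∀ y ∈ C, s x y) (hcard : C.card = n + 3) {S : Finset R}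
    (hS : S ⊆ C) (b : B) (hb : (trace P C b).card = S.card) :
    ∃ b', t b b' ∧ ∀ x ∈ C, (P x b' ↔ x ∈ S) := by
  classical
  obtain ⟨m, hm⟩ : ∃ m, (S \ trace P C b).card = m := ⟨_, rfl⟩
  induction m generalizing b with
  | zero =>
    have hsub : S ⊆ trace P C b := by
      rwa [Finset.card_eq_zero, Finset.sdiff_eq_empty_iff_subset] at hm
    have heq := Finset.eq_of_subset_of_card_le hsub hb.le
    refine ⟨b, h.equiv_blue.refl b, fun x hx => ?_⟩
    rw [heq, mem_trace]
    simp [hx]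
  | succ m hind =>
    have hd : (S \ trace P C b).card = (trace P C b \ S).card :=
      (Finset.card_sdiff_comm hb).symm
    obtain ⟨v, hv⟩ := Finset.card_pos.1 (show 0 < (S \ trace P C b).card by omega)
    obtain ⟨u, hu⟩ := Finset.card_pos.1 (show 0 < (trace P C b \ S).card by omega)
    rw [Finset.mem_sdiff] at hu hv
    have huC : u ∈ C := (mem_trace.1 hu.1).1
    have huP : P u b := (mem_trace.1 hu.1).2
    have hvC : v ∈ C := hS hv.1
    have hvP : ¬ P v b := fun e => hv.2 (mem_trace.2 ⟨hvC, e⟩)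
    obtain ⟨b₁, hb₁, hP₁⟩ := h.exists_trace_swap ih hC hcard huC hvC b
    have htr : trace P C b₁ = insert v ((trace P C b).erase u) := by
      ext x
      simp only [mem_trace, Finset.mem_insert, Finset.mem_erase]
      by_cases hx : x ∈ C
      · rw [hP₁ x hx, Equiv.swap_apply_def]
        split_ifs with e₁ e₂
        · subst e₁
          simp only [hvP, and_false, ne_eq, not_true_eq_false, false_and, or_false, false_iff]
          rintro rfl
          exact hvP huP
        · simp [e₂, huP, hvC]
        · simp [e₁, e₂, hx]
      · simp only [hx, false_and, and_false, or_false, false_iff]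
        rintro rfl
        exact hx hvC
    have hvt : v ∉ (trace P C b).erase u := fun e => hv.2 (Finset.mem_of_mem_erase e)
    have hcard₁ : (trace P C b₁).card = S.card := by
      rw [htr, Finset.card_insert_of_notMem hvt, Finset.card_erase_add_one hu.1, hb]
    have hdiff : S \ trace P C b₁ = (S \ trace P C b).erase v := by
      ext x
      rw [htr]
      simp only [Finset.mem_sdiff, Finset.mem_insert, Finset.mem_erase]
      by_cases hxu : x = u
      · subst hxu
        simp [hu.2]
      · tauto
    obtain ⟨b', hb', hP'⟩ := hind b₁ hcard₁ (by
      rw [hdiff, Finset.card_erase_of_mem (Finset.mem_sdiff.2 hv), hm]; rfl)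
    exact ⟨b', h.equiv_blue.trans hb₁ hb', hP'⟩

/-- Red cliques of size `n + 3` are not maximal. -/
theorem exists_notMem_red (h : HomogeneousPair s t P) (ih : AllTraces s t P (n + 2))
    {C : Finset R} (hC : ∀ x ∈ C, ∀ y ∈ C, s x y) (hcard : C.card = n + 3) :
    ∃ x, x ∉ C ∧ ∀ y ∈ C, s x y := by
  classical
  obtain ⟨c, hc⟩ := Finset.card_pos.1 (show 0 < C.card by omega)
  have hA : (C.erase c).card = n + 2 := by rw [Finset.card_erase_of_mem hc, hcard]; rfl
  have hAs : ∀ x ∈ C.erase c, ∀ y ∈ C.erase c, s x y :=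
    fun x hx y hy => hC _ (Finset.mem_of_mem_erase hx) _ (Finset.mem_of_mem_erase hy)
  obtain ⟨r, hr⟩ := Finset.card_pos.1 (show 0 < (C.erase c).card by omega)
  obtain ⟨-, -, b₀, -⟩ := h.diamond
  obtain ⟨u, -, hu⟩ := ih _ hAs hA b₀ (C.erase c) subset_rfl
  obtain ⟨v, -, hv⟩ := ih _ hAs hA b₀ ∅ (Finset.empty_subset _)
  obtain ⟨r', hr', hP'⟩ := h.exists_adj_red r v
  obtain ⟨φ, γ, h₁, -, h₃, rfl, rfl⟩ := h.extend_one_one (r := r) (b := u)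
    (iff_of_true hP' ((hu r hr).2 hr))
  by_contra hcon
  push Not at hcon
  have hsub : (C.erase c).image φ ⊆ {c} := by
    intro x hx
    obtain ⟨y, hy, rfl⟩ := Finset.mem_image.1 hx
    have hPy : P (φ y) (γ u) := (h₃ _ _).2 ((hu y hy).2 hy)
    have hyC : φ y ∈ C := by
      by_contra hy'
      obtain ⟨z, hz, hsz⟩ := hcon _ hy'
      refine hsz (h.equiv_red.trans ((h₁ y r).2 (hAs y hy r hr)) ?_)
      exact h.equiv_red.trans (h.equiv_red.symm hr') (hC r (Finset.mem_of_mem_erase hr) z hz)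
    rw [Finset.mem_singleton]
    by_contra hne
    simpa using (hv (φ y) (Finset.mem_erase.2 ⟨hne, hyC⟩)).1 hPy
  have := Finset.card_le_card hsub
  rw [Finset.card_image_of_injective _ φ.injective, Finset.card_singleton] at this
  omega

/-- Of two consecutive sizes at least one is a trace size. -/
theorem exists_trace_card_consecutive (ih : AllTraces s t P (n + 2)) {C : Finset R}
    (hC : ∀ x ∈ C, ∀ y ∈ C, s x y) (hcard : C.card = n + 3) (b : B) {m : ℕ} (hm : m ≤ n + 2) :
    ∃ b', t b b' ∧ ((trace P C b').card = m ∨ (trace P C b').card = m + 1) := by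
  classical
  obtain ⟨c, hc⟩ := Finset.card_pos.1 (show 0 < C.card by omega)
  have hA : (C.erase c).card = n + 2 := by rw [Finset.card_erase_of_mem hc, hcard]; rfl
  obtain ⟨S, hS, hSm⟩ := Finset.exists_subset_card_eq (s := C.erase c) (n := m) (by omega)
  obtain ⟨b', hb', hP⟩ := ih (C.erase c)
    (fun x hx y hy => hC _ (Finset.mem_of_mem_erase hx) _ (Finset.mem_of_mem_erase hy)) hA b S hS
  have hcS : c ∉ S := fun e => by simpa using hS e
  refine ⟨b', hb', ?_⟩
  by_cases hPc : P c b'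
  · right
    rw [← hSm, ← Finset.card_insert_of_notMem hcS]
    congr 1
    refine trace_eq_of_forall
      (Finset.insert_subset hc (hS.trans (Finset.erase_subset _ _))) fun x hx => ?_
    by_cases hxc : x = c
    · simp [hxc, hPc]
    · simpa [hxc] using hP x (Finset.mem_erase.2 ⟨hxc, hx⟩)
  · left
    rw [← hSm]
    congr 1
    refine trace_eq_of_forall (hS.trans (Finset.erase_subset _ _)) fun x hx => ?_
    by_cases hxc : x = c
    · simp [hxc, hPc, hcS]
    · exact hP x (Finset.mem_erase.2 ⟨hxc, hx⟩)

/-- On some red clique of size `n + 3`, some blue clique has two consecutive trace sizes. -/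
theorem exists_consecutive_trace_cards (h : HomogeneousPair s t P) (ih : AllTraces s t P (n + 2))
    {C : Finset R} (hC : ∀ x ∈ C, ∀ y ∈ C, s x y) (hcard : C.card = n + 3) :
    ∃ (C₁ : Finset R) (b b' : B) (m : ℕ), (∀ x ∈ C₁, ∀ y ∈ C₁, s x y) ∧ C₁.card = n + 3 ∧
      t b b' ∧ m ≤ n + 2 ∧ (trace P C₁ b).card = m ∧ (trace P C₁ b').card = m + 1 := by
  classical
  obtain ⟨x, hxC, hxs⟩ := h.exists_notMem_red ih hC hcard
  obtain ⟨p, hp, q, hq, hpq⟩ := Finset.one_lt_card.1 (show 1 < C.card by omega)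
  have hX : ∀ y ∈ insert x C, ∀ z ∈ insert x C, s y z :=
    h.clique_insert hC hxs
  have hXcard : (insert x C).card = n + 4 := by rw [Finset.card_insert_of_notMem hxC, hcard]
  have hpX : p ∈ insert x C := Finset.mem_insert_of_mem hp
  have hqX : q ∈ insert x C := Finset.mem_insert_of_mem hq
  generalize insert x C = X at hX hXcard hpX hqX
  have herase : ∀ z ∈ X, (X.erase z).card = n + 3 := fun z hz => by
    rw [Finset.card_erase_of_mem hz, hXcard]; rfl
  have hs : ∀ z, ∀ y ∈ X.erase z, ∀ w ∈ X.erase z, s y w := fun z y hy w hw =>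
    hX _ (Finset.mem_of_mem_erase hy) _ (Finset.mem_of_mem_erase hw)
  have htrace : ∀ z b, trace P (X.erase z) b = (trace P X b).erase z := fun z b => by
    ext y
    simp [mem_trace, and_assoc]
  obtain ⟨-, -, b₀, -⟩ := h.diamond
  obtain ⟨u, hu, hup, huq⟩ := h.exists_trace_two hpq (hC p hp q hq) b₀ True True
  obtain ⟨v, hv, hvp, hvq⟩ := h.exists_trace_two hpq (hC p hp q hq) b₀ True False
  have hpu : p ∈ trace P X u := mem_trace.2 ⟨hpX, hup.2 trivial⟩
  have hqu : q ∈ trace P X u := mem_trace.2 ⟨hqX, huq.2 trivial⟩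
  have hpv : p ∈ trace P X v := mem_trace.2 ⟨hpX, hvp.2 trivial⟩
  have hqv : q ∉ trace P X v := fun e => hvq.1 (mem_trace.1 e).2
  have huv : t u v := h.equiv_blue.trans (h.equiv_blue.symm hu) hv
  obtain ⟨w, hw, hwcard⟩ := h.transfer_trace_card (hs q) (hs p)
    ((herase q hqX).trans (herase p hpX).symm) (b := u) (b' := u)
    (by rw [htrace, htrace, Finset.card_erase_of_mem hpu, Finset.card_erase_of_mem hqu]) huv
  refine ⟨X.erase p, v, w, (trace P (X.erase p) v).card, hs p, herase p hpX,
    h.equiv_blue.trans (h.equiv_blue.symm huv) hw, ?_, rfl, ?_⟩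
  · have hle : (trace P X v).card ≤ (X.erase q).card := Finset.card_le_card fun y hy =>
      Finset.mem_erase.2 ⟨fun e => hqv (e ▸ hy), (mem_trace.1 hy).1⟩
    rw [herase q hqX] at hle
    rw [htrace, Finset.card_erase_of_mem hpv]
    omega
  · rw [hwcard, htrace, htrace, Finset.erase_eq_of_notMem hqv, Finset.card_erase_add_one hpv]

/-- All pairs of a blue clique and a red clique of size `n + 3` have the same trace sizes. -/
theorem exists_trace_card_eq (h : HomogeneousPair s t P) (ih : AllTraces s t P (n + 2))
    {C C' : Finset R} (hC : ∀ x ∈ C, ∀ y ∈ C, s x y) (hcard : C.card = n + 3)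
    (hC' : ∀ x ∈ C', ∀ y ∈ C', s x y) (hcard' : C'.card = n + 3) (b b' : B) :
    ∃ c', t b' c' ∧ (trace P C' c').card = (trace P C b).card := by
  obtain ⟨C₁, b₁, b₂, m, hC₁, hcard₁, hb₁₂, hm, hm₁, hm₂⟩ :=
    h.exists_consecutive_trace_cards ih hC hcard
  have common : ∀ {D : Finset R}, (∀ x ∈ D, ∀ y ∈ D, s x y) → D.card = n + 3 → ∀ d,
      ∃ d' e, t d d' ∧ t b₁ e ∧ (trace P D d').card = (trace P C₁ e).card := by
    intro D hD hDcard d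
    obtain ⟨d', hd', he | he⟩ := exists_trace_card_consecutive ih hD hDcard d hm
    · exact ⟨d', b₁, hd', h.equiv_blue.refl _, he.trans hm₁.symm⟩
    · exact ⟨d', b₂, hd', hb₁₂, he.trans hm₂.symm⟩
  obtain ⟨d, e, hd, he, hde⟩ := common hC hcard b
  obtain ⟨d', e', hd', he', hde'⟩ := common hC' hcard' b'
  obtain ⟨f, hf, hfcard⟩ := h.transfer_trace_card hC hC₁ (hcard.trans hcard₁.symm) hde
    (h.equiv_blue.symm hd)
  obtain ⟨g, hg, hgcard⟩ := h.transfer_trace_card hC₁ hC' (hcard₁.trans hcard'.symm) hde'.symm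
    (h.equiv_blue.trans (h.equiv_blue.symm he') (h.equiv_blue.trans he hf))
  exact ⟨g, h.equiv_blue.trans hd' hg, hgcard.trans hfcard⟩

/-- Some red clique of size `n + 3` has a common blue neighbor. -/
theorem exists_trace_card_full (h : HomogeneousPair s t P) (ih : AllTraces s t P (n + 2))
    {C : Finset R} (hC : ∀ x ∈ C, ∀ y ∈ C, s x y) (hcard : C.card = n + 3) :
    ∃ (C' : Finset R) (b : B), (∀ x ∈ C', ∀ y ∈ C', s x y) ∧ C'.card = n + 3 ∧
      (trace P C' b).card = n + 3 := by
  classical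
  by_contra hcon
  push Not at hcon
  obtain ⟨x, hxC, hxs⟩ := h.exists_notMem_red ih hC hcard
  obtain ⟨c₀, c₁, c₂, hc₀, hc₁, hc₂, h01, h02, h12⟩ :=
    Finset.two_lt_card_iff.1 (show 2 < C.card by omega)
  have hX : ∀ y ∈ insert x C, ∀ z ∈ insert x C, s y z :=
    h.clique_insert hC hxs
  have hXcard : (insert x C).card = n + 4 := by rw [Finset.card_insert_of_notMem hxC, hcard]
  have hxX : x ∈ insert x C := Finset.mem_insert_self _ _
  have hX₀ : c₀ ∈ insert x C := Finset.mem_insert_of_mem hc₀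
  have hX₁ : c₁ ∈ insert x C := Finset.mem_insert_of_mem hc₁
  have hX₂ : c₂ ∈ insert x C := Finset.mem_insert_of_mem hc₂
  have hx₀ : x ≠ c₀ := fun e => hxC (e ▸ hc₀)
  have hx₁ : x ≠ c₁ := fun e => hxC (e ▸ hc₁)
  have hx₂ : x ≠ c₂ := fun e => hxC (e ▸ hc₂)
  generalize insert x C = X at *
  obtain ⟨-, -, b₀, -⟩ := h.diamond
  -- Each vertex with neighborhood `X \ {p, q}` in `X` has no further neighbors in that red clique.
  have exact_trace : ∀ p ∈ X, ∀ q ∈ X, p ≠ q → ∃ u, t b₀ u ∧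
      ∀ y, s x y → (P y u ↔ y ∈ (X.erase p).erase q) := by
    intro p hp q hq hpq
    have hA : ((X.erase p).erase q).card = n + 2 := by
      rw [Finset.card_erase_of_mem (Finset.mem_erase.2 ⟨hpq.symm, hq⟩),
        Finset.card_erase_of_mem hp, hXcard]
      rfl
    have hAX : (X.erase p).erase q ⊆ X :=
      (Finset.erase_subset _ _).trans (Finset.erase_subset _ _)
    generalize (X.erase p).erase q = A at hA hAX
    obtain ⟨u, hu, huP⟩ := ih A (fun y hy z hz => hX _ (hAX hy) _ (hAX hz)) hA b₀ A subset_rfl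
    refine ⟨u, hu, fun y hy => ⟨fun hPy => ?_, fun hyA => (huP y hyA).2 hyA⟩⟩
    by_contra hyA
    have hins : (insert y A).card = n + 3 := by rw [Finset.card_insert_of_notMem hyA, hA]
    refine hcon (insert y A) u ?_ hins ?_
    · have hsy : ∀ z ∈ insert y A, s x z := by
        intro z hz
        rcases Finset.mem_insert.1 hz with rfl | hz
        · exact hy
        · exact hX _ hxX _ (hAX hz)
      exact fun z hz w hw => h.equiv_red.trans (h.equiv_red.symm (hsy z hz)) (hsy w hw)
    · rw [trace_eq_of_forall subset_rfl, hins]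
      intro z hz
      refine iff_of_true ?_ hz
      rcases Finset.mem_insert.1 hz with rfl | hz
      · exact hPy
      · exact (huP z hz).2 hz
  obtain ⟨u, hu, huP⟩ := exact_trace x hxX c₀ hX₀ hx₀
  obtain ⟨v, hv, hvP⟩ := exact_trace c₀ hX₀ c₁ hX₁ h01
  obtain ⟨w, hw, hwP⟩ := exact_trace c₁ hX₁ c₂ hX₂ h12
  have hsx : ∀ y ∈ X, s x y := fun y hy => hX x hxX y hy
  have huv : u ≠ v := by
    rintro rfl
    have : P c₁ u := (huP c₁ (hsx c₁ hX₁)).2 (by simp [hX₁, h01.symm, hx₁.symm])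
    simpa using (hvP c₁ (hsx c₁ hX₁)).1 this
  have huw : u ≠ w := by
    rintro rfl
    have : P c₁ u := (huP c₁ (hsx c₁ hX₁)).2 (by simp [hX₁, h01.symm, hx₁.symm])
    simpa using (hwP c₁ (hsx c₁ hX₁)).1 this
  have htuv : t u v := h.equiv_blue.trans (h.equiv_blue.symm hu) hv
  have htuw : t u w := h.equiv_blue.trans (h.equiv_blue.symm hu) hw
  obtain ⟨r, hr, hru, hrv⟩ := h.exists_common_red x huv htuv
  obtain ⟨r', hr', hru', hrw'⟩ := h.exists_common_red x huw htuw
  obtain ⟨γ, φ, -, h₁, h₃, hγu, hγv, hφ⟩ := h.swap.extend_two_one huv htuv huw htuw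
    (b := r) (c := r') (iff_of_true hru' hru) (iff_of_true hrw' hrv)
  have hsub : (((X.erase x).erase c₀).erase c₁).image φ ⊆
      (((X.erase x).erase c₀).erase c₁).erase c₂ := by
    intro y hy
    obtain ⟨z, hz, rfl⟩ := Finset.mem_image.1 hy
    simp only [Finset.mem_erase] at hz
    obtain ⟨hz₁, hz₀, hzx, hzX⟩ := hz
    have hzs : s x (φ z) := by
      refine h.equiv_red.trans hr' (hφ ▸ (h₁ r z).2 ?_)
      exact h.equiv_red.trans (h.equiv_red.symm hr) (hsx z hzX)
    have hPu : P (φ z) u := by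
      have := (h₃ u z).2 ((huP z (hsx z hzX)).2 (by simp [hz₀, hzx, hzX]))
      rwa [hγu] at this
    have hPw : P (φ z) w := by
      have := (h₃ v z).2 ((hvP z (hsx z hzX)).2 (by simp [hz₀, hz₁, hzX]))
      rwa [hγv] at this
    have m₁ := (huP _ hzs).1 hPu
    have m₂ := (hwP _ hzs).1 hPw
    simp only [Finset.mem_erase] at m₁ m₂ ⊢
    exact ⟨m₂.1, m₂.2.1, m₁⟩
  have hlt : ((((X.erase x).erase c₀).erase c₁).erase c₂).card <
      (((X.erase x).erase c₀).erase c₁).card :=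
    Finset.card_erase_lt_of_mem (by simp [hX₂, hx₂.symm, h02.symm, h12.symm])
  have := Finset.card_le_card hsub
  rw [Finset.card_image_of_injective _ φ.injective] at this
  omega

/-- Nonempty subsets of a red clique of size `n + 3` are traces, provided that all traces occur
on smaller cliques. -/
theorem exists_trace_of_nonempty (h : HomogeneousPair s t P) (ih : AllTraces s t P (n + 2))
    {C : Finset R} (hC : ∀ x ∈ C, ∀ y ∈ C, s x y) (hcard : C.card = n + 3) (b : B)
    {S : Finset R} (hS : S ⊆ C) (hne : S.Nonempty) :
    ∃ b', t b b' ∧ ∀ x ∈ C, (P x b' ↔ x ∈ S) := by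
  classical
  by_contra hcon
  have hno : ∀ {D : Finset R}, (∀ x ∈ D, ∀ y ∈ D, s x y) → D.card = n + 3 → ∀ d,
      (trace P D d).card ≠ S.card := by
    intro D hD hDcard d hd
    obtain ⟨c, hc, hccard⟩ := h.exists_trace_card_eq ih hD hDcard hC hcard d b
    obtain ⟨b', hb', hP⟩ := h.exists_trace_of_card_eq ih hC hcard hS c (hccard.trans hd)
    exact hcon ⟨b', h.equiv_blue.trans hc hb', hP⟩
  have hpos := hne.card_pos
  have hle := Finset.card_le_card hS
  rcases hle.lt_or_eq with hlt | heq
  swap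
  · obtain ⟨C', d, hC', hcard', hd⟩ := h.exists_trace_card_full ih hC hcard
    exact hno hC' hcard' d (by omega)
  obtain ⟨c, hc⟩ := Finset.card_pos.1 (show 0 < C.card by omega)
  have hA : (C.erase c).card = n + 2 := by rw [Finset.card_erase_of_mem hc, hcard]; rfl
  have hAs : ∀ x ∈ C.erase c, ∀ y ∈ C.erase c, s x y :=
    fun x hx y hy => hC _ (Finset.mem_of_mem_erase hx) _ (Finset.mem_of_mem_erase hy)
  generalize C.erase c = A at hA hAs
  obtain ⟨r, hrA⟩ := Finset.card_pos.1 (show 0 < A.card by omega)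
  obtain ⟨T, hT, hTcard⟩ := Finset.exists_subset_card_eq (s := A) (n := S.card - 1) (by omega)
  obtain ⟨w, -, hwP⟩ := ih A hAs hA b T hT
  obtain ⟨u, -, huP⟩ := ih A hAs hA b A subset_rfl
  have hw : ∀ y, s r y → P y w → y ∈ T := by
    intro y hy hPy
    by_contra hyT
    have hyA : y ∉ A := fun e => hyT ((hwP y e).1 hPy)
    have hsy : ∀ z ∈ insert y A, s r z := by
      intro z hz
      rcases Finset.mem_insert.1 hz with rfl | hz
      · exact hy
      · exact hAs r hrA z hz
    refine hno (D := insert y A)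
      (fun z hz w hw => h.equiv_red.trans (h.equiv_red.symm (hsy z hz)) (hsy w hw))
      (by rw [Finset.card_insert_of_notMem hyA, hA]) w ?_
    rw [trace_eq_of_forall (S := insert y T) (Finset.insert_subset_insert y hT),
      Finset.card_insert_of_notMem hyT, hTcard]
    · omega
    · intro z hz
      rcases Finset.mem_insert.1 hz with rfl | hz
      · simp [hPy]
      · have hzy : z ≠ y := fun e => hyA (e ▸ hz)
        simpa [hzy] using hwP z hz
  obtain ⟨r', hr', hPr'⟩ := h.exists_adj_red r w
  obtain ⟨φ, γ, h₁, -, h₃, rfl, rfl⟩ := h.extend_one_one (r := r) (b := u)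
    (iff_of_true hPr' ((huP r hrA).2 hrA))
  have hsub : A.image φ ⊆ T := by
    intro y hy
    obtain ⟨z, hz, rfl⟩ := Finset.mem_image.1 hy
    exact hw _ (h.equiv_red.trans hr' ((h₁ r z).2 (hAs r hrA z hz)))
      ((h₃ z u).2 ((huP z hz).2 hz))
  have := Finset.card_le_card hsub
  rw [Finset.card_image_of_injective _ φ.injective] at this
  omega

end Step

theorem allTraces_compl {n : ℕ} (hn : AllTraces s t P n) :
    AllTraces s t (fun r b => ¬ P r b) n := by
  classical
  intro C hC hcard b S hS
  obtain ⟨b', hb', hP⟩ := hn C hC hcard b (C \ S) Finset.sdiff_subset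
  exact ⟨b', hb', fun x hx => by simp [hP x hx, hx]⟩

theorem allTraces_succ (h : HomogeneousPair s t P) {n : ℕ} (ih : AllTraces s t P (n + 2)) :
    AllTraces s t P (n + 3) := by
  intro C hC hcard b S hS
  rcases S.eq_empty_or_nonempty with rfl | hne
  · obtain ⟨b', hb', hP⟩ := h.compl.exists_trace_of_nonempty (allTraces_compl ih) hC hcard b
      (S := C) subset_rfl (Finset.card_pos.1 (by omega))
    exact ⟨b', hb', fun x hx => by simpa [hx] using hP x hx⟩
  · exact h.exists_trace_of_nonempty ih hC hcard b hS hne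

theorem allTraces (h : HomogeneousPair s t P) : ∀ n, AllTraces s t P n
  | 0 => h.allTraces_zero
  | 1 => h.allTraces_one
  | 2 => h.allTraces_two
  | n + 3 => h.allTraces_succ (h.allTraces (n + 2))

end HomogeneousPair

theorem IsUnionOfCliques.equivalence {V : Type} {G : SimpleGraph V} {p : V → Prop}
    (h : IsUnionOfCliques G {v | p v}) :
    Equivalence (fun u v : {v // p v} => u.1 = v.1 ∨ G.Adj u.1 v.1) where
  refl u := Or.inl rfl
  symm huv := huv.imp Eq.symm SimpleGraph.Adj.symm
  trans := by
    rintro ⟨u, hu⟩ ⟨v, hv⟩ ⟨w, hw⟩ huv hvw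
    dsimp only at huv hvw ⊢
    rcases huv with rfl | huv
    · exact hvw
    · rcases hvw with rfl | hvw
      · exact Or.inr huv
      · exact or_iff_not_imp_left.2 (h u hu v hv w hw huv hvw)

theorem IsBasicCUH.homogeneousPair {V : Type} {G : SimpleGraph V} {red : V → Prop}
    (hG : IsBasicCUH G red) (hD : Realizes G red Dgraph Dred)
    (hDt : Realizes G red Dtilde Dred) :
    HomogeneousPair (fun u v : {v // red v} => u.1 = v.1 ∨ G.Adj u.1 v.1)
      (fun u v : {v // ¬ red v} => u.1 = v.1 ∨ G.Adj u.1 v.1)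
      (fun r b => G.Adj r.1 b.1) where
  equiv_red := hG.1.2.2.2.1.equivalence
  equiv_blue := hG.1.2.2.2.2.equivalence
  extend S T hS hT f g hf hg hs ht hP := by
    classical
    let F : V → V := fun v => if h : red v then f ⟨v, h⟩ else g ⟨v, h⟩
    have F_red : ∀ x : {v // red v}, F x = f x := fun x => by simp only [F, dif_pos x.2]
    have F_blue : ∀ x : {v // ¬ red v}, F x = g x := fun x => by simp only [F, dif_neg x.2]
    have f_inj : ∀ x ∈ S, ∀ y ∈ S, ((f x).1 = (f y).1 ↔ x.1 = y.1) := fun x hx y hy =>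
      ⟨fun e => congrArg _ (hf hx hy (Subtype.ext e)), fun e => by rw [Subtype.ext e]⟩
    have g_inj : ∀ x ∈ T, ∀ y ∈ T, ((g x).1 = (g y).1 ↔ x.1 = y.1) := fun x hx y hy =>
      ⟨fun e => congrArg _ (hg hx hy (Subtype.ext e)), fun e => by rw [Subtype.ext e]⟩
    have adj_of : ∀ {x y x' y' : V}, (x' = y' ↔ x = y) →
        (x' = y' ∨ G.Adj x' y' ↔ x = y ∨ G.Adj x y) → (G.Adj x' y' ↔ G.Adj x y) := by
      intro x y x' y' he ha
      by_cases e : x = y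
      · rw [e, he.2 e]
        simp
      · have e' : ¬ x' = y' := fun h => e (he.1 h)
        simpa [e, e'] using ha
    have hiso : IsPartialIso G red (Subtype.val '' S ∪ Subtype.val '' T) F := by
      refine ⟨?_, ?_, ?_⟩
      · rintro _ (⟨x, hx, rfl⟩ | ⟨x, hx, rfl⟩) _ (⟨y, hy, rfl⟩ | ⟨y, hy, rfl⟩) hxy
        · rw [F_red, F_red] at hxy
          exact (f_inj x hx y hy).1 hxy
        · rw [F_red, F_blue] at hxy
          exact absurd (hxy ▸ (f x).2) (g y).2
        · rw [F_red, F_blue] at hxy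
          exact absurd (hxy ▸ (f y).2) (g x).2
        · rw [F_blue, F_blue] at hxy
          exact (g_inj x hx y hy).1 hxy
      · rintro _ (⟨x, hx, rfl⟩ | ⟨x, hx, rfl⟩)
        · rw [F_red]
          exact iff_of_true (f x).2 x.2
        · rw [F_blue]
          exact iff_of_false (g x).2 x.2
      · rintro _ (⟨x, hx, rfl⟩ | ⟨x, hx, rfl⟩) _ (⟨y, hy, rfl⟩ | ⟨y, hy, rfl⟩)
        · rw [F_red, F_red]
          exact adj_of (f_inj x hx y hy) (hs x hx y hy)
        · rw [F_red, F_blue]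
          exact hP x hx y hy
        · rw [F_red, F_blue, G.adj_comm, G.adj_comm x.1]
          exact hP y hy x hx
        · rw [F_blue, F_blue]
          exact adj_of (g_inj x hx y hy) (ht x hx y hy)
    obtain ⟨ψ, hψ, hψF⟩ := hG.1.2.2.1 _ ((hS.image _).union (hT.image _)) F hiso
    refine ⟨ψ.toEquiv.subtypeEquiv fun v => (hψ v).symm,
      ψ.toEquiv.subtypeEquiv fun v => not_congr (hψ v).symm, ?_, ?_, ?_, ?_, ?_⟩
    · intro x y
      exact or_congr ψ.injective.eq_iff ψ.map_adj_iff
    · intro x y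
      exact or_congr ψ.injective.eq_iff ψ.map_adj_iff
    · intro x y
      exact ψ.map_adj_iff
    · intro x hx
      exact Subtype.ext ((hψF x.1 (Or.inl ⟨x, hx, rfl⟩)).trans (F_red x))
    · intro x hx
      exact Subtype.ext ((hψF x.1 (Or.inr ⟨x, hx, rfl⟩)).trans (F_blue x))
  diamond := by
    obtain ⟨f, hf, hred, hadj⟩ := hD
    refine ⟨⟨f 0, by simp [hred, Dred]⟩, ⟨f 1, by simp [hred, Dred]⟩,
      ⟨f 2, by simp [hred, Dred]⟩, ⟨f 3, by simp [hred, Dred]⟩, ?_⟩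
    simp [hadj, Dgraph, hf.eq_iff]
  path := by
    obtain ⟨f, hf, hred, hadj⟩ := hDt
    refine ⟨⟨f 0, by simp [hred, Dred]⟩, ⟨f 1, by simp [hred, Dred]⟩,
      ⟨f 2, by simp [hred, Dred]⟩, ⟨f 3, by simp [hred, Dred]⟩, ?_⟩
    simp [hadj, Dtilde, hf.eq_iff]

theorem IsMaxCliqueIn.nonempty {V : Type} {G : SimpleGraph V} {P M : Set V}
    (hM : IsMaxCliqueIn G P M) {v : V} (hv : v ∈ P) : M.Nonempty := by
  by_contra hne
  rw [Set.not_nonempty_iff_eq_empty] at hne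
  have := hM.2.2 {v} (by simpa using hv) (by simp) (by simp [hne])
  rw [hne] at this
  exact Set.singleton_ne_empty v this.symm

theorem IsMaxCliqueIn.mem_of_adj {V : Type} {G : SimpleGraph V} {P M : Set V}
    (hP : IsUnionOfCliques G P) (hM : IsMaxCliqueIn G P M) {v w : V} (hv : v ∈ M) (hw : w ∈ P)
    (hvw : G.Adj v w) : w ∈ M := by
  have hcl : G.IsClique (insert w M) := by
    refine hM.2.1.insert fun u hu hne => ?_
    by_cases huv : u = v
    · exact huv ▸ hvw.symm
    · exact hP w hw v (hM.1 hv) u (hM.1 hu) hvw.symm (hM.2.1 hv hu (Ne.symm huv)) hne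
  rw [hM.2.2 (insert w M) (Set.insert_subset hw hM.1) hcl (Set.subset_insert _ _)]
  exact Set.mem_insert _ _

/-- in a basic CUH graph realizing `D` and `D̃`, given a maximal blue clique
`M_B` and a finite red clique `C` with `|C| ≤ ω_R`, every subset `S ⊆ C` is the exact
neighborhood in `C` of some vertex of `M_B`. -/
theorem stmt_7 {V : Type} (G : SimpleGraph V) (red : V → Prop)
    (hG : IsBasicCUH G red)
    (hD : Realizes G red Dgraph Dred) (hDt : Realizes G red Dtilde Dred)
    (MB : Set V) (hMB : IsMaxCliqueIn G {v | ¬ red v} MB)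
    (C : Finset V) (hCred : ∀ v ∈ C, red v)
    (hCcl : ∀ u ∈ C, ∀ v ∈ C, u ≠ v → G.Adj u v)
    (hωR : ∀ M : Set V, IsMaxCliqueIn G {v | red v} M → (C.card : Cardinal) ≤ Cardinal.mk M) :
    ∀ S ⊆ C, ∃ v ∈ MB, ∀ u ∈ C, G.Adj v u ↔ u ∈ S := by
  classical
  intro S hS
  have h := hG.homogeneousPair hD hDt
  obtain ⟨-, -, b₀, -⟩ := h.diamond
  obtain ⟨b, hb⟩ := hMB.nonempty b₀.2
  obtain ⟨v, hv, hP⟩ := h.allTraces _ (C.subtype red)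
    (fun x hx y hy => or_iff_not_imp_left.2
      (hCcl x.1 (by simpa using hx) y.1 (by simpa using hy)))
    rfl ⟨b, hMB.1 hb⟩ (S.subtype red) (fun x hx => by simpa using hS (by simpa using hx))
  refine ⟨v, ?_, fun u hu => ?_⟩
  · rcases hv with hv | hv
    · exact hv ▸ hb
    · exact hMB.mem_of_adj hG.1.2.2.2.2 hb v.2 hv
  · rw [G.adj_comm]
    simpa using hP ⟨u, hCred u hu⟩ (by simpa using hu)
end

section
/- Let G be a basic CUH graph that omits D and in which at least one color class does not form an independent set. Then ω_R ∈ {1, 2, ℵ₀}. Moreover, if ω_R = ℵ₀, then α_B = ℵ₀ and for every blue vertex b and every maximal red clique M_R, both the set of neighbors of b in M_R and the set of non-neighbors of b in M_R are infinite. -/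
open SimpleGraph

/-- Two vertices are in the same monochromatic clique. -/
def SameClique {V : Type} (G : SimpleGraph V) (red : V → Prop) (u v : V) : Prop :=
  u = v ∨ (G.Adj u v ∧ (red u ↔ red v))

section Cliques

variable {V : Type} {G : SimpleGraph V} {red : V → Prop}

lemma SameClique.red_iff {u v : V} (h : SameClique G red u v) : red u ↔ red v := by
  rcases h with rfl | h
  · rfl
  · exact h.2

lemma SameClique.symm {u v : V} (h : SameClique G red u v) : SameClique G red v u := by
  rcases h with rfl | h
  · exact Or.inl rfl
  · exact Or.inr ⟨h.1.symm, h.2.symm⟩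

lemma IsCUH.sameClique_trans (hG : IsCUH G red) {u v w : V} (h : SameClique G red u v)
    (h' : SameClique G red v w) : SameClique G red u w := by
  obtain ⟨-, -, -, hR, hB⟩ := hG
  rcases h with rfl | ⟨huv, cuv⟩
  · exact h'
  rcases h' with rfl | ⟨hvw, cvw⟩
  · exact Or.inr ⟨huv, cuv⟩
  by_cases huw : u = w
  · exact Or.inl huw
  refine Or.inr ⟨?_, cuv.trans cvw⟩
  by_cases hv : red v
  · exact hR u (cuv.2 hv) v hv w (cvw.1 hv) huv hvw huw
  · exact hB u (fun h => hv (cuv.1 h)) v hv w (fun h => hv (cvw.2 h)) huv hvw huw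

/-- The equivalence relation whose classes are the maximal monochromatic cliques. -/
def IsCUH.cliqueSetoid (hG : IsCUH G red) : Setoid V where
  r := SameClique G red
  iseqv := ⟨fun _ => Or.inl rfl, fun h => h.symm, fun h h' => hG.sameClique_trans h h'⟩

lemma SameClique.map {ψ : G ≃g G} (hψ : ∀ v, red (ψ v) ↔ red v) {u v : V}
    (h : SameClique G red u v) : SameClique G red (ψ u) (ψ v) := by
  rcases h with rfl | ⟨h, c⟩
  · exact Or.inl rfl
  · exact Or.inr ⟨ψ.map_adj_iff.2 h, by rw [hψ, hψ, c]⟩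

lemma sameClique_map_iff {ψ : G ≃g G} (hψ : ∀ v, red (ψ v) ↔ red v) {u v : V} :
    SameClique G red (ψ u) (ψ v) ↔ SameClique G red u v := by
  rw [SameClique, SameClique, ψ.map_adj_iff, hψ, hψ, ψ.injective.eq_iff]

lemma adj_iff_sameClique_and_ne {u v : V} (hc : red u ↔ red v) :
    G.Adj u v ↔ SameClique G red u v ∧ u ≠ v :=
  ⟨fun h => ⟨Or.inr ⟨h, hc⟩, h.ne⟩, fun h => (h.1.resolve_left h.2).1⟩

/-- Ultrahomogeneity for isomorphisms given by finite tuples of vertices. -/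
lemma Ultrahomogeneous.exists_iso_of_tuple (h : Ultrahomogeneous G red) {ι : Type} [Finite ι]
    (a b : ι → V) (heq : ∀ i j, a i = a j ↔ b i = b j) (hred : ∀ i, red (b i) ↔ red (a i))
    (hadj : ∀ i j, G.Adj (b i) (b j) ↔ G.Adj (a i) (a j)) :
    ∃ ψ : G ≃g G, (∀ v, red (ψ v) ↔ red v) ∧ ∀ i, ψ (a i) = b i := by
  have hf : Function.FactorsThrough b a := fun i j hij => (heq i j).1 hij
  have hext : ∀ i, Function.extend a b id (a i) = b i := hf.extend_apply id
  obtain ⟨ψ, hψ, hψa⟩ := h (Set.range a) (Set.finite_range a) (Function.extend a b id) (by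
    refine ⟨?_, ?_, ?_⟩
    · rintro _ ⟨i, rfl⟩ _ ⟨j, rfl⟩ hij
      rw [hext, hext] at hij
      exact (heq i j).2 hij
    · rintro _ ⟨i, rfl⟩
      rw [hext, hred]
    · rintro _ ⟨i, rfl⟩ _ ⟨j, rfl⟩
      rw [hext, hext, hadj])
  exact ⟨ψ, hψ, fun i => (hψa _ ⟨i, rfl⟩).trans (hext i)⟩

lemma Ultrahomogeneous.exists_iso_apply_eq (h : Ultrahomogeneous G red) {u v : V}
    (hc : red v ↔ red u) : ∃ ψ : G ≃g G, (∀ v, red (ψ v) ↔ red v) ∧ ψ u = v := by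
  obtain ⟨ψ, hψ, h⟩ := h.exists_iso_of_tuple (fun _ : Unit => u) (fun _ => v)
    (by simp) (by simpa using hc) (by simp)
  exact ⟨ψ, hψ, h ()⟩

/-- Two red vertices with the same adjacency to the blue vertices `b`, `b'` are conjugate over
`b`, `b'`. -/
lemma Ultrahomogeneous.exists_iso_fixing_pair (h : Ultrahomogeneous G red) {b b' u v : V}
    (hb : ¬ red b) (hb' : ¬ red b') (hu : red u) (hv : red v)
    (e : G.Adj b u ↔ G.Adj b v) (e' : G.Adj b' u ↔ G.Adj b' v) :
    ∃ ψ : G ≃g G, (∀ v, red (ψ v) ↔ red v) ∧ ψ b = b ∧ ψ b' = b' ∧ ψ u = v := by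
  have hbu : b ≠ u := fun h => hb (h ▸ hu)
  have hbv : b ≠ v := fun h => hb (h ▸ hv)
  have hbu' : b' ≠ u := fun h => hb' (h ▸ hu)
  have hbv' : b' ≠ v := fun h => hb' (h ▸ hv)
  obtain ⟨ψ, hψ, h⟩ := h.exists_iso_of_tuple ![b, b', u] ![b, b', v]
    (by
      intro i j
      fin_cases i <;> fin_cases j <;> simp [hbu, hbv, hbu', hbv', hbu.symm, hbv.symm,
        hbu'.symm, hbv'.symm])
    (by intro i; fin_cases i <;> simp [hu, hv])
    (by
      intro i j
      fin_cases i <;> fin_cases j <;> simp [e, e', G.adj_comm u, G.adj_comm v])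
  exact ⟨ψ, hψ, h 0, h 1, h 2⟩

/-- Any two triples of distinct vertices of red cliques are conjugate. -/
lemma Ultrahomogeneous.exists_iso_triple (h : Ultrahomogeneous G red) {a b c x y z : V}
    (ha : red a) (hx : red x)
    (hab : SameClique G red a b) (hac : SameClique G red a c) (hbc : SameClique G red b c)
    (hxy : SameClique G red x y) (hxz : SameClique G red x z) (hyz : SameClique G red y z)
    (nab : a ≠ b) (nac : a ≠ c) (nbc : b ≠ c) (nxy : x ≠ y) (nxz : x ≠ z) (nyz : y ≠ z) :
    ∃ ψ : G ≃g G, (∀ v, red (ψ v) ↔ red v) ∧ ψ a = x ∧ ψ b = y ∧ ψ c = z := by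
  have hb := hab.red_iff.1 ha
  have hc := hac.red_iff.1 ha
  have hy := hxy.red_iff.1 hx
  have hz := hxz.red_iff.1 hx
  have e1 := (hab.resolve_left nab).1
  have e2 := (hac.resolve_left nac).1
  have e3 := (hbc.resolve_left nbc).1
  have e4 := (hxy.resolve_left nxy).1
  have e5 := (hxz.resolve_left nxz).1
  have e6 := (hyz.resolve_left nyz).1
  obtain ⟨ψ, hψ, h⟩ := h.exists_iso_of_tuple ![a, b, c] ![x, y, z]
    (by
      intro i j
      fin_cases i <;> fin_cases j <;> simp [nab, nac, nbc, nxy, nxz, nyz, nab.symm, nac.symm,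
        nbc.symm, nxy.symm, nxz.symm, nyz.symm])
    (by intro i; fin_cases i <;> simp [*])
    (by
      intro i j
      fin_cases i <;> fin_cases j <;> simp [e1, e2, e3, e4, e5, e6, e1.symm, e2.symm, e3.symm,
        e4.symm, e5.symm, e6.symm])
  exact ⟨ψ, hψ, h 0, h 1, h 2⟩

lemma IsCUH.eq_class_of_isMaxCliqueIn (hG : IsCUH G red) {r₀ : V} (hr₀ : red r₀) {M : Set V}
    (hM : IsMaxCliqueIn G {v | red v} M) :
    ∃ r, red r ∧ M = {v | SameClique G red r v} := by
  obtain ⟨hsub, hcl, hmax⟩ := hM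
  have hne : M.Nonempty := by
    rw [Set.nonempty_iff_ne_empty]
    rintro rfl
    have := hmax {r₀} (by simpa using hr₀) (by simp) (by simp)
    exact absurd this.symm (Set.singleton_ne_empty r₀)
  obtain ⟨r, hr⟩ := hne
  have hrr : red r := hsub hr
  refine ⟨r, hrr, hmax _ (fun v hv => hv.red_iff.1 hrr) ?_ ?_⟩
  · intro u hu v hv huv
    exact ((hG.sameClique_trans hu.symm hv).resolve_left huv).1
  · intro v hv
    by_cases h : r = v
    · exact Or.inl h
    · exact Or.inr ⟨hcl hr hv h, iff_of_true hrr (hsub hv)⟩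

/-- If blue vertices do not separate adjacent red vertices, then `G` is a blow-up. -/
lemma IsCUH.isBlowUpOf_of_twins (hG : IsCUH G red) {r s : V} (hr : red r) (hs : red s)
    (hrs : G.Adj r s)
    (htw : ∀ b u v, ¬ red b → red u → SameClique G red u v → (G.Adj b u ↔ G.Adj b v)) :
    IsBlowUpOf G red := by
  classical
  have : Countable V := hG.1
  let rep : V → V := fun v => (Quotient.mk hG.cliqueSetoid v).out
  have hrep : ∀ v, SameClique G red (rep v) v := fun v =>
    Quotient.exact (s := hG.cliqueSetoid) (Quotient.out_eq _)
  have hrepeq : ∀ {u v}, SameClique G red u v → rep u = rep v := fun h =>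
    congrArg Quotient.out (Quotient.sound (s := hG.cliqueSetoid) h)
  have hψ : ∀ u : V, ∃ ψ : G ≃g G, (∀ v, red (ψ v) ↔ red v) ∧ (red u → ψ r = u) := by
    intro u
    by_cases hu : red u
    · obtain ⟨ψ, h, h'⟩ := hG.2.2.1.exists_iso_apply_eq (iff_of_true hu hr)
      exact ⟨ψ, h, fun _ => h'⟩
    · exact ⟨Iso.refl, fun _ => Iff.rfl, fun h => absurd h hu⟩
  choose ψ hψred hψr using hψ
  let U : Type := {v : V // red v → rep v = v}
  let H : SimpleGraph U := G.comap Subtype.val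
  let redH : U → Prop := fun u => red u.1
  let I : Type := {v : V // SameClique G red r v}
  have hmem : ∀ (u : {v : U // redH v}) (i : I), SameClique G red u.1.1 (ψ u.1.1 i.1) := by
    intro u i
    have := i.2.map (hψred u.1.1)
    rwa [hψr _ u.2] at this
  let F : {v : U // redH v} × I ⊕ {v : U // ¬ redH v} → V :=
    Sum.elim (fun p => ψ p.1.1.1 p.2.1) (fun b => b.1.1)
  have hFred : ∀ x, red (F x) ↔ blowUpRed U redH I x := by
    rintro (⟨u, i⟩ | b)
    · exact iff_of_true ((hmem u i).red_iff.1 u.2) trivial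
    · exact iff_of_false b.2 id
  have hU : ∀ {u v : {v : U // redH v}}, SameClique G red u.1.1 v.1.1 → u = v := by
    intro u v h
    have := hrepeq h
    rw [u.1.2 u.2, v.1.2 v.2] at this
    exact Subtype.ext (Subtype.ext this)
  have hFinj : Function.Injective F := by
    rintro (⟨u, i⟩ | b) (⟨v, j⟩ | c) h
    · change ψ u.1.1 i.1 = ψ v.1.1 j.1 at h
      have huv : u = v := hU (hG.sameClique_trans (hmem u i) (h ▸ (hmem v j).symm))
      subst huv
      have : i = j := Subtype.ext ((ψ u.1.1).injective h)
      rw [this]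
    · exact absurd ((hFred _).1 (h ▸ (hFred (Sum.inl (u, i))).2 trivial)) id
    · exact absurd ((hFred _).1 (h ▸ (hFred (Sum.inl (v, j))).2 trivial)) id
    · exact congrArg Sum.inr (Subtype.ext (Subtype.ext h))
  have hFsurj : Function.Surjective F := by
    intro v
    by_cases hv : red v
    · have hrv : red (rep v) := (hrep v).red_iff.2 hv
      let u : {v : U // redH v} := ⟨⟨rep v, fun _ => hrepeq (hrep v)⟩, hrv⟩
      refine ⟨Sum.inl (u, ⟨(ψ (rep v)).symm v, ?_⟩), ?_⟩
      · rw [← sameClique_map_iff (hψred (rep v)), hψr _ hrv, RelIso.apply_symm_apply]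
        exact hrep v
      · exact (ψ (rep v)).apply_symm_apply v
    · exact ⟨Sum.inr ⟨⟨v, fun h => absurd h hv⟩, hv⟩, rfl⟩
  have hind : ∀ u v : U, redH u → redH v → ¬ H.Adj u v := by
    intro u v hu hv h
    have h : G.Adj u.1 v.1 := h
    have := hrepeq (Or.inr ⟨h, iff_of_true hu hv⟩)
    rw [u.2 hu, v.2 hv] at this
    exact h.ne this
  have hcross : ∀ (u : {v : U // redH v}) (i : I) (b : {v : U // ¬ redH v}),
      G.Adj b.1.1 (ψ u.1.1 i.1) ↔ G.Adj b.1.1 u.1.1 := fun u i b =>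
    (htw _ _ _ b.2 u.2 (hmem u i)).symm
  have hFadj : ∀ x y, G.Adj (F x) (F y) ↔ (blowUp H redH I).Adj x y := by
    rintro (⟨u, i⟩ | b) (⟨v, j⟩ | c)
    · have hxy := adj_iff_sameClique_and_ne (G := G) (iff_of_true
        ((hFred (Sum.inl (u, i))).2 trivial) ((hFred (Sum.inl (v, j))).2 trivial))
      rw [hxy, hFinj.ne_iff, blowUp, SimpleGraph.fromRel_adj]
      have hsame : SameClique G red (F (Sum.inl (u, i))) (F (Sum.inl (v, j))) ↔ u = v := by
        constructor
        · intro h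
          exact hU (hG.sameClique_trans (hmem u i) (hG.sameClique_trans h (hmem v j).symm))
        · rintro rfl
          exact hG.sameClique_trans (hmem u i).symm (hmem u j)
      rw [hsame]
      have h1 := hind u.1 v.1 u.2 v.2
      have h2 := hind v.1 u.1 v.2 u.2
      simp only [h1, h2, false_or, ne_eq, Sum.inl.injEq, Prod.mk.injEq]
      tauto
    · have : G.Adj (F (Sum.inl (u, i))) (F (Sum.inr c)) ↔ H.Adj u.1 c.1 := by
        rw [G.adj_comm, H.adj_comm]
        exact hcross u i c
      rw [this, blowUp, SimpleGraph.fromRel_adj]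
      simp [H.adj_comm c.1 u.1]
    · have : G.Adj (F (Sum.inr b)) (F (Sum.inl (v, j))) ↔ H.Adj b.1 v.1 := hcross v j b
      rw [this, blowUp, SimpleGraph.fromRel_adj]
      simp [H.adj_comm v.1 b.1]
    · have : G.Adj (F (Sum.inr b)) (F (Sum.inr c)) ↔ H.Adj b.1 c.1 := Iff.rfl
      rw [this, blowUp, SimpleGraph.fromRel_adj]
      simp only [ne_eq, Sum.inr.injEq, H.adj_comm c.1 b.1, or_self]
      exact ⟨fun h => ⟨fun hbc => h.ne (congrArg Subtype.val hbc), h⟩, fun h => h.2⟩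
  let e : blowUp H redH I ≃g G :=
    { toEquiv := Equiv.ofBijective F ⟨hFinj, hFsurj⟩
      map_rel_iff' := hFadj _ _ }
  refine ⟨U, H, redH, I, hind, ?_, Cardinal.mk_le_aleph0, e.symm, ?_⟩
  · rw [Cardinal.two_le_iff]
    refine ⟨⟨r, Or.inl rfl⟩, ⟨s, Or.inr ⟨hrs, iff_of_true hr hs⟩⟩, fun h => hrs.ne ?_⟩
    exact congrArg Subtype.val h
  · intro v
    rw [← hFred]
    change red v ↔ red (e (e.symm v))
    rw [e.apply_symm_apply]

/-- Every blue vertex has a neighbor and a non-neighbor in every maximal red clique. -/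
lemma IsBasicCUH.exists_adj_exists_not_adj (hG : IsBasicCUH G red) {r s : V} (hr : red r)
    (hs : red s) (hrs : G.Adj r s) {b u : V} (hb : ¬ red b) (hu : red u) :
    (∃ x, SameClique G red u x ∧ G.Adj b x) ∧ ∃ y, SameClique G red u y ∧ ¬ G.Adj b y := by
  have hsep : ∃ b x y, ¬ red b ∧ red x ∧ SameClique G red x y ∧ G.Adj b x ∧ ¬ G.Adj b y := by
    by_contra! hcon
    refine hG.2.1 (Or.inl (hG.1.isBlowUpOf_of_twins hr hs hrs ?_))
    intro b u v hb hu huv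
    exact ⟨hcon b u v hb hu huv, hcon b v u hb (huv.red_iff.1 hu) huv.symm⟩
  obtain ⟨b₀, x₀, y₀, hb₀, hx₀, hxy₀, hbx₀, hby₀⟩ := hsep
  have hU := hG.1.2.2.1
  obtain ⟨ψ, hψ, rfl⟩ := hU.exists_iso_apply_eq (iff_of_false hb hb₀)
  have hx := (hψ x₀).2 hx₀
  have hxy := hxy₀.map hψ
  have hbx := ψ.map_adj_iff.2 hbx₀
  have hby := fun h => hby₀ (ψ.map_adj_iff.1 h)
  by_cases h : G.Adj (ψ b₀) u
  · refine ⟨⟨u, Or.inl rfl, h⟩, ?_⟩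
    obtain ⟨φ, hφ, h1, -, h2⟩ := hU.exists_iso_fixing_pair hb hb hx hu
      (iff_of_true hbx h) (iff_of_true hbx h)
    refine ⟨φ (ψ y₀), h2 ▸ hxy.map hφ, fun h => hby ?_⟩
    rw [← h1] at h
    exact φ.map_adj_iff.1 h
  · refine ⟨?_, ⟨u, Or.inl rfl, h⟩⟩
    obtain ⟨φ, hφ, h1, -, h2⟩ := hU.exists_iso_fixing_pair hb hb (hxy.red_iff.1 hx) hu
      (iff_of_false hby h) (iff_of_false hby h)
    refine ⟨φ (ψ x₀), h2 ▸ hxy.symm.map hφ, ?_⟩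
    have := φ.map_adj_iff.2 hbx
    rwa [h1] at this

/-- Three distinct vertices in one red clique yield three distinct vertices in each. -/
lemma IsCUH.exists_sameClique_ne_ne (hG : IsCUH G red) {a b c u : V} (ha : red a)
    (hab : SameClique G red a b) (hac : SameClique G red a c)
    (nab : a ≠ b) (nac : a ≠ c) (nbc : b ≠ c) (hu : red u) (x y : V) :
    ∃ w, SameClique G red u w ∧ w ≠ x ∧ w ≠ y := by
  obtain ⟨ψ, hψ, rfl⟩ := hG.2.2.1.exists_iso_apply_eq (iff_of_true hu ha)
  have h1 := hab.map hψ
  have h2 := hac.map hψ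
  have n1 := ψ.injective.ne nab
  have n2 := ψ.injective.ne nac
  have n3 := ψ.injective.ne nbc
  by_cases ea : ψ a ≠ x ∧ ψ a ≠ y
  · exact ⟨ψ a, Or.inl rfl, ea⟩
  by_cases eb : ψ b ≠ x ∧ ψ b ≠ y
  · exact ⟨ψ b, h1, eb⟩
  exact ⟨ψ c, h2, by grind⟩

/-- A finite set of red vertices that determines the neighborhood of `b` within a second red
clique can be fixed while swapping a neighbor and a non-neighbor of `b`; this is impossible if
red cliques have at least three vertices. -/
lemma IsCUH.not_determined_by_finite (hG : IsCUH G red) {b x y w m : V} (hb : ¬ red b)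
    (hx : red x) (hm : red m) (hxm : ¬ SameClique G red x m) (hxy : SameClique G red x y)
    (hxw : SameClique G red x w) (hwx : w ≠ x) (hwy : w ≠ y)
    (hbx : G.Adj b x) (hby : ¬ G.Adj b y)
    (hmix : (∃ z, SameClique G red m z ∧ G.Adj b z) ∧ ∃ z, SameClique G red m z ∧ ¬ G.Adj b z)
    {A : Set V} (hAm : ∀ v ∈ A, SameClique G red m v) (hA : A.Finite) (hne : A.Nonempty)
    (hdet : ∀ ψ : G ≃g G, (∀ v, SameClique G red m (ψ v) ↔ SameClique G red m v) →
      (∀ v ∈ A, ψ v = v) → ∀ v, SameClique G red m v → (G.Adj (ψ b) v ↔ G.Adj b v)) :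
    False := by
  classical
  have hy := hxy.red_iff.1 hx
  have hxA : ∀ v ∈ A, v ≠ x ∧ v ≠ y := by
    intro v hv
    constructor
    · rintro rfl
      exact hxm (hAm _ hv).symm
    · rintro rfl
      exact hxm (hG.sameClique_trans hxy (hAm _ hv).symm)
  have hSred : ∀ v ∈ insert x (insert y (insert w A)), red v := by
    rintro v (rfl | rfl | rfl | hv)
    · exact hx
    · exact hy
    · exact hxw.red_iff.1 hx
    · exact (hAm v hv).red_iff.1 hm
  have hswap : ∀ v, SameClique G red (Equiv.swap x y v) v := by
    intro v
    by_cases h1 : v = x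
    · subst h1
      rw [Equiv.swap_apply_left]
      exact hxy.symm
    by_cases h2 : v = y
    · subst h2
      rw [Equiv.swap_apply_right]
      exact hxy
    rw [Equiv.swap_apply_of_ne_of_ne h1 h2]
    exact Or.inl rfl
  obtain ⟨ψ, hψ, hψS⟩ := hG.2.2.1 (insert x (insert y (insert w A)))
    (((hA.insert w).insert y).insert x) (Equiv.swap x y) (by
      refine ⟨(Equiv.swap x y).injective.injOn, fun v _ => (hswap v).red_iff, ?_⟩
      intro u hu v hv
      have hc : red u ↔ red v := iff_of_true (hSred u hu) (hSred v hv)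
      rw [adj_iff_sameClique_and_ne hc, adj_iff_sameClique_and_ne
        ((hswap u).red_iff.trans (hc.trans (hswap v).red_iff.symm)),
        (Equiv.swap x y).injective.ne_iff]
      refine and_congr_left fun _ => ⟨fun h => ?_, fun h => ?_⟩
      · exact hG.sameClique_trans (hswap u).symm (hG.sameClique_trans h (hswap v))
      · exact hG.sameClique_trans (hswap u) (hG.sameClique_trans h (hswap v).symm))
  have hψx : ψ x = y := by simpa using hψS x (by simp)
  have hψy : ψ y = x := by simpa using hψS y (by simp)
  have hψw : ψ w = w := by
    rw [hψS w (by simp), Equiv.swap_apply_of_ne_of_ne hwx hwy]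
  have hψA : ∀ v ∈ A, ψ v = v := by
    intro v hv
    rw [hψS v (by simp [hv]), Equiv.swap_apply_of_ne_of_ne (hxA v hv).1 (hxA v hv).2]
  have hψm : ∀ v, SameClique G red m (ψ v) ↔ SameClique G red m v := by
    obtain ⟨a, ha⟩ := hne
    have hcl : ∀ v, SameClique G red m v ↔ SameClique G red a v := fun v =>
      ⟨hG.sameClique_trans (hAm a ha).symm, hG.sameClique_trans (hAm a ha)⟩
    intro v
    have := sameClique_map_iff (G := G) hψ (u := a) (v := v)
    rwa [hψA a ha, ← hcl, ← hcl] at this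
  have hagree := hdet ψ hψm hψA
  have hb' : ¬ red (ψ b) := fun h => hb ((hψ b).1 h)
  have hw : G.Adj (ψ b) w ↔ G.Adj b w := by
    conv_lhs => rw [← hψw]
    exact ψ.map_adj_iff
  obtain ⟨z, hz, hbz⟩ : ∃ z, SameClique G red m z ∧ (G.Adj b w ↔ G.Adj b z) := by
    by_cases h : G.Adj b w
    · obtain ⟨z, hz, h'⟩ := hmix.1
      exact ⟨z, hz, iff_of_true h h'⟩
    · obtain ⟨z, hz, h'⟩ := hmix.2
      exact ⟨z, hz, iff_of_false h h'⟩
  obtain ⟨φ, hφ, hφb, hφb', hφw⟩ := hG.2.2.1.exists_iso_fixing_pair hb hb'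
    (hxw.red_iff.1 hx) (hz.red_iff.1 hm) hbz (by rw [hw, hbz, hagree z hz])
  have hφx : SameClique G red m (φ x) :=
    hG.sameClique_trans hz (hφw ▸ (hxw.symm.map hφ))
  have hbφx : G.Adj b (φ x) := by
    have := φ.map_adj_iff.2 hbx
    rwa [hφb] at this
  have hbφx' := (hagree _ hφx).2 hbφx
  rw [← hφb', φ.map_adj_iff, ← hψy, ψ.map_adj_iff] at hbφx'
  exact hby hbφx'

/-- If red cliques have at least three vertices, every blue vertex has infinitely many
neighbors and non-neighbors in every maximal red clique. -/
lemma IsBasicCUH.infinite_adj_and_infinite_not_adj (hG : IsBasicCUH G red) {a₁ a₂ a₃ : V}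
    (ha : red a₁) (h12 : SameClique G red a₁ a₂) (h13 : SameClique G red a₁ a₃)
    (n12 : a₁ ≠ a₂) (n13 : a₁ ≠ a₃) (n23 : a₂ ≠ a₃) {b m : V} (hb : ¬ red b) (hm : red m) :
    {u | SameClique G red m u ∧ G.Adj b u}.Infinite ∧
      {u | SameClique G red m u ∧ ¬ G.Adj b u}.Infinite := by
  have hC := hG.1
  have hmixed : ∀ u, red u → (∃ x, SameClique G red u x ∧ G.Adj b x) ∧
      ∃ y, SameClique G red u y ∧ ¬ G.Adj b y := fun u hu =>
    hG.exists_adj_exists_not_adj ha (h12.red_iff.1 ha) (h12.resolve_left n12).1 hb hu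
  obtain ⟨u, hu, hum⟩ : ∃ u, red u ∧ ¬ SameClique G red u m := by
    obtain ⟨u, v, hu, hv, huv, hadj⟩ := hG.2.2.1
    by_contra! hcon
    rcases hC.sameClique_trans (hcon u hu) (hcon v hv).symm with h | h
    · exact huv h
    · exact hadj h.1
  obtain ⟨⟨x, hux, hbx⟩, y, huy, hby⟩ := hmixed u hu
  obtain ⟨w, huw, hwx, hwy⟩ := hC.exists_sameClique_ne_ne ha h12 h13 n12 n13 n23 hu x y
  have hxm : ¬ SameClique G red x m := fun h => hum (hC.sameClique_trans hux h)
  have key := fun A => hC.not_determined_by_finite (A := A) hb (hux.red_iff.1 hu) hm hxm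
    (hC.sameClique_trans hux.symm huy) (hC.sameClique_trans hux.symm huw) hwx hwy hbx hby
    (hmixed m hm)
  have hiff : ∀ ψ : G ≃g G, (∀ v, SameClique G red m (ψ v) ↔ SameClique G red m v) →
      ∀ v, SameClique G red m v →
        SameClique G red m (ψ.symm v) ∧ (G.Adj (ψ b) v ↔ G.Adj b (ψ.symm v)) := by
    intro ψ hψ v hv
    have hv' : ψ (ψ.symm v) = v := ψ.apply_symm_apply v
    refine ⟨(hψ _).1 (by rwa [hv']), ?_⟩
    conv_lhs => rw [← hv']
    exact ψ.map_adj_iff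
  constructor
  · intro hfin
    obtain ⟨z, hz⟩ := (hmixed m hm).1
    refine key _ (fun v hv => hv.1) hfin ⟨z, hz⟩ fun ψ hψ hfix v hv => ?_
    obtain ⟨hv', hadj⟩ := hiff ψ hψ v hv
    rw [hadj]
    constructor
    · intro h
      have := hfix _ ⟨hv', h⟩
      rw [RelIso.apply_symm_apply] at this
      rwa [← this] at h
    · intro h
      have := hfix v ⟨hv, h⟩
      rwa [← this, RelIso.symm_apply_apply]
  · intro hfin
    obtain ⟨z, hz⟩ := (hmixed m hm).2
    refine key _ (fun v hv => hv.1) hfin ⟨z, hz⟩ fun ψ hψ hfix v hv => ?_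
    obtain ⟨hv', hadj⟩ := hiff ψ hψ v hv
    rw [hadj, ← not_iff_not]
    constructor
    · intro h
      have := hfix _ ⟨hv', h⟩
      rw [RelIso.apply_symm_apply] at this
      rwa [← this] at h
    · intro h
      have := hfix v ⟨hv, h⟩
      rwa [← this, RelIso.symm_apply_apply]

/-- Omitting `D`: adjacent red vertices with a common neighbor in a blue clique have the same
neighbors in that clique. -/
lemma adj_iff_adj_of_not_realizes_Dgraph (h : ¬ Realizes G red Dgraph Dred) {x y b c : V}
    (hx : red x) (hy : red y) (hb : ¬ red b) (hxy : G.Adj x y) (hbc : SameClique G red b c)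
    (hxb : G.Adj x b) (hyb : G.Adj y b) : G.Adj x c ↔ G.Adj y c := by
  have main : ∀ x y, red x → red y → G.Adj x y → G.Adj x b → G.Adj y b →
      G.Adj x c → G.Adj y c := by
    intro x y hx hy hxy hxb hyb hxc
    by_contra hyc
    rcases hbc with rfl | ⟨hadj, hcol⟩
    · exact hyc hyb
    have hc : ¬ red c := fun h => hb (hcol.2 h)
    have hcy : ¬ G.Adj c y := fun h => hyc h.symm
    refine h ⟨![x, y, b, c], ?_, ?_, ?_⟩
    · intro i j hij
      have := hxy.ne
      have := hxb.ne
      have := hyb.ne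
      have := hxc.ne
      have := hadj.ne
      have : y ≠ c := fun h => hc (h ▸ hy)
      fin_cases i <;> fin_cases j <;> simp_all
    · intro i
      fin_cases i <;> simp [Dred, hx, hy, hb, hc]
    · intro i j
      fin_cases i <;> fin_cases j <;>
        simp [Dgraph, hxy, hxb, hyb, hxc, hadj, hyc, hxy.symm, hxb.symm, hyb.symm, hxc.symm,
          hadj.symm, hcy]
  exact ⟨main x y hx hy hxy hxb hyb, main y x hy hx hxy.symm hyb hxb⟩

/-- If every blue vertex has infinitely many neighbors and non-neighbors in every red clique
and `D` is omitted, then there are infinitely many blue cliques. -/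
lemma IsCUH.exists_infinite_blue_isIndepIn (hG : IsCUH G red)
    (hD : ¬ Realizes G red Dgraph Dred) {b m : V} (hb : ¬ red b) (hm : red m)
    (hinf : {u | SameClique G red m u ∧ G.Adj b u}.Infinite)
    (hinf' : {u | SameClique G red m u ∧ ¬ G.Adj b u}.Infinite) :
    ∃ S : Set V, S ⊆ {v | ¬ red v} ∧ IsIndepIn G S ∧ S.Infinite := by
  classical
  let Q := Quotient (hG.cliqueSetoid.comap (Subtype.val : {v : V // ¬ red v} → V))
  have hout : ∀ q : Q, Quotient.mk _ q.out = q := Quotient.out_eq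
  have hsame : ∀ {c d : {v : V // ¬ red v}}, (Quotient.mk _ c : Q) = Quotient.mk _ d ↔
      SameClique G red c.1 d.1 := fun {c d} => Quotient.eq
  rcases finite_or_infinite Q with hfin | hQ
  swap
  · refine ⟨Set.range fun q : Q => q.out.1, ?_, ?_, ?_⟩
    · rintro _ ⟨q, rfl⟩
      exact q.out.2
    · rintro _ ⟨p, rfl⟩ _ ⟨q, rfl⟩ h
      have : p = q := by
        rw [← hout p, ← hout q]
        exact hsame.2 (Or.inr ⟨h, iff_of_false p.out.2 q.out.2⟩)
      subst this
      exact h.ne rfl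
    · refine Set.infinite_range_of_injective fun p q h => ?_
      rw [← hout p, ← hout q]
      exact hsame.2 (Or.inl h)
  exfalso
  let T : V → V → Set Q := fun r s =>
    {q | ∀ c : {v : V // ¬ red v}, Quotient.mk _ c = q → (G.Adj r c.1 ↔ G.Adj s c.1)}
  have hmcl : Set.Infinite {u | SameClique G red m u ∧ u ≠ m} := by
    have : {u | SameClique G red m u}.Infinite := hinf.mono fun u hu => hu.1
    exact this.sdiff (Set.finite_singleton m)
  have : Infinite {u | SameClique G red m u ∧ u ≠ m} := hmcl.to_subtype
  obtain ⟨⟨s, hs, hsm⟩, ⟨t, ht, htm⟩, hst, hT⟩ :=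
    Finite.exists_ne_map_eq_of_infinite
      (fun u : {u | SameClique G red m u ∧ u ≠ m} => T m u.1)
  have nst : s ≠ t := fun h => hst (Subtype.ext h)
  obtain ⟨x, ⟨hx, hbx⟩⟩ := hinf.nonempty
  obtain ⟨x', ⟨hx', hbx'⟩, hxx'⟩ := hinf.exists_notMem_finite (Set.finite_singleton x)
  have nxx' : x ≠ x' := fun h => hxx' h.symm
  obtain ⟨y, hy, hby⟩ := hinf'.nonempty
  have hxr := hx.red_iff.1 hm
  have sxx' := hG.sameClique_trans hx.symm hx'
  have sxy := hG.sameClique_trans hx.symm hy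
  obtain ⟨ψ, hψ, h1, h2, h3⟩ := hG.2.2.1.exists_iso_triple hm hxr hs ht
    (hG.sameClique_trans hs.symm ht) sxx' sxy
    (hG.sameClique_trans hx'.symm hy) hsm.symm htm.symm nst nxx'
    (fun h => hby (h ▸ hbx)) (fun h => hby (h ▸ hbx'))
  let c : {v : V // ¬ red v} := ⟨ψ.symm b, fun h => hb (by
    rw [← ψ.apply_symm_apply b]
    exact (hψ _).2 h)⟩
  have hψc : ψ c.1 = b := ψ.apply_symm_apply b
  have hcs : Quotient.mk _ c ∈ T m s := by
    intro d hd
    have hbd : SameClique G red b (ψ d.1) := by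
      rw [← hψc]
      exact (hsame.1 hd).symm.map hψ
    rw [← ψ.map_adj_iff, ← ψ.map_adj_iff (v := s), h1, h2]
    exact adj_iff_adj_of_not_realizes_Dgraph hD hxr (hx'.red_iff.1 hm) hb
      (sxx'.resolve_left nxx').1 hbd hbx.symm hbx'.symm
  have hct : Quotient.mk _ c ∈ T m t := by
    have hT : T m s = T m t := hT
    exact hT ▸ hcs
  have := hct c rfl
  rw [← ψ.map_adj_iff, ← ψ.map_adj_iff (v := t), h1, h3, hψc] at this
  exact hby (this.1 hbx.symm).symm

end Cliques

/-- in a basic CUH graph omitting `D` with a non-independent color class,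
ω_R ∈ {1, 2, ℵ₀}; and if ω_R = ℵ₀ then α_B = ℵ₀ and every blue vertex has infinitely many
neighbors and infinitely many non-neighbors in every maximal red clique. -/
theorem stmt_12 {V : Type} (G : SimpleGraph V) (red : V → Prop)
    (hG : IsBasicCUH G red)
    (hOmD : ¬ Realizes G red Dgraph Dred)
    (hni : (∃ u v, red u ∧ red v ∧ G.Adj u v) ∨ (∃ u v, ¬ red u ∧ ¬ red v ∧ G.Adj u v)) :
    ((∀ M : Set V, IsMaxCliqueIn G {v | red v} M → Cardinal.mk M = 1) ∨
     (∀ M : Set V, IsMaxCliqueIn G {v | red v} M → Cardinal.mk M = 2) ∨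
     (∀ M : Set V, IsMaxCliqueIn G {v | red v} M → Cardinal.mk M = Cardinal.aleph0)) ∧
    ((∀ M : Set V, IsMaxCliqueIn G {v | red v} M → Cardinal.mk M = Cardinal.aleph0) →
      (∃ S : Set V, S ⊆ {v | ¬ red v} ∧ IsIndepIn G S ∧ S.Infinite) ∧
      ∀ b, ¬ red b → ∀ M : Set V, IsMaxCliqueIn G {v | red v} M →
        {u | u ∈ M ∧ G.Adj b u}.Infinite ∧ {u | u ∈ M ∧ ¬ G.Adj b u}.Infinite) := by
  have hC := hG.1
  have : Countable V := hC.1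
  obtain ⟨r₀, -, hr₀, -⟩ := hG.2.2.1
  obtain ⟨b₀, -, hb₀, -⟩ := hG.2.2.2
  refine ⟨?_, fun hinf => ?_⟩
  · by_cases hedge : ∃ r s, red r ∧ SameClique G red r s ∧ r ≠ s
    swap
    · refine Or.inl fun M hM => ?_
      obtain ⟨r, hr, rfl⟩ := hC.eq_class_of_isMaxCliqueIn hr₀ hM
      have : {v | SameClique G red r v} = {r} := by
        ext v
        refine ⟨fun hv => ?_, fun hv => Or.inl hv.symm⟩
        by_contra hne
        exact hedge ⟨r, v, hr, hv, fun h => hne h.symm⟩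
      rw [this, Cardinal.mk_singleton]
    by_cases htri : ∃ r s t, red r ∧ SameClique G red r s ∧ SameClique G red r t ∧
        r ≠ s ∧ r ≠ t ∧ s ≠ t
    · obtain ⟨r, s, t, hr, hrs, hrt, nrs, nrt, nst⟩ := htri
      refine Or.inr (Or.inr fun M hM => ?_)
      obtain ⟨m, hm, rfl⟩ := hC.eq_class_of_isMaxCliqueIn hr₀ hM
      have h := (hG.infinite_adj_and_infinite_not_adj hr hrs hrt nrs nrt nst hb₀ hm).1
      have : Infinite {v | SameClique G red m v} := (h.mono fun u hu => hu.1).to_subtype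
      exact Cardinal.mk_eq_aleph0 _
    · refine Or.inr (Or.inl fun M hM => ?_)
      obtain ⟨m, hm, rfl⟩ := hC.eq_class_of_isMaxCliqueIn hr₀ hM
      obtain ⟨r, s, hr, hrs, nrs⟩ := hedge
      obtain ⟨ψ, hψ, rfl⟩ := hC.2.2.1.exists_iso_apply_eq (iff_of_true hm hr)
      have : {v | SameClique G red (ψ r) v} = {ψ r, ψ s} := by
        ext v
        constructor
        · intro hv
          by_contra hne
          simp only [Set.mem_insert_iff, Set.mem_singleton_iff, not_or] at hne
          exact htri ⟨ψ r, ψ s, v, hm, hrs.map hψ, hv, ψ.injective.ne nrs,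
            fun h => hne.1 h.symm, fun h => hne.2 h.symm⟩
        · rintro (rfl | rfl)
          · exact Or.inl rfl
          · exact hrs.map hψ
      rw [this, Cardinal.mk_insert (by simpa using ψ.injective.ne nrs), Cardinal.mk_singleton,
        one_add_one_eq_two]
  · have hmax : IsMaxCliqueIn G {v | red v} {v | SameClique G red r₀ v} := by
      refine ⟨fun v hv => hv.red_iff.1 hr₀, fun u hu v hv huv =>
        ((hC.sameClique_trans hu.symm hv).resolve_left huv).1, fun M hM hcl hsub => ?_⟩
      refine hsub.antisymm fun v hv => ?_
      by_cases h : r₀ = v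
      · exact Or.inl h
      · exact Or.inr ⟨hcl (hsub (Or.inl rfl)) hv h, iff_of_true hr₀ (hM hv)⟩
    have hcl : {v | SameClique G red r₀ v}.Infinite := by
      rw [← Set.infinite_coe_iff, Cardinal.infinite_iff, hinf _ hmax]
    obtain ⟨s, hs, hs'⟩ := hcl.exists_notMem_finite (Set.finite_singleton r₀)
    obtain ⟨t, ht, ht'⟩ := hcl.exists_notMem_finite (Set.toFinite {r₀, s})
    simp only [Set.mem_insert_iff, Set.mem_singleton_iff, not_or] at hs' ht'
    have key := fun b m (hb : ¬ red b) (hm : red m) =>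
      hG.infinite_adj_and_infinite_not_adj hr₀ hs ht (Ne.symm hs') (Ne.symm ht'.1)
        (Ne.symm ht'.2) hb hm
    refine ⟨hC.exists_infinite_blue_isIndepIn hOmD hb₀ hr₀ (key b₀ r₀ hb₀ hr₀).1
      (key b₀ r₀ hb₀ hr₀).2, fun b hb M hM => ?_⟩
    obtain ⟨m, hm, rfl⟩ := hC.eq_class_of_isMaxCliqueIn hr₀ hM
    exact key b m hb hm
end
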